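/- Let R be a symmetric quantum nilpotent algebra of dimension N with function η (from the prime element theorem) and its predecessor and successor functions p and s, and let λ*_k denote the h*_k-eigenvalue of x_k. Then λ*_k = λ*_l for all 1 ≤ k, l ≤ N such that η(k) = η(l), s(k) ≠ +∞ and s(l) ≠ +∞; moreover λ*_k = λ_l^{−1} for all 1 ≤ k, l ≤ N such that η(k) = η(l), s(k) ≠ +∞ and p(l) ≠ −∞ (where λ_l is the h_l-eigenvalue of x_l). -/

import Mathlib

open scoped BigOperators

noncomputable section

universe u v

/-- The group of `K`-points of a split torus of rank `r`. -/
abbrev Torus (K : Type u) [Field K] (r : ℕ) : Type u := Fin r → Kˣ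

section Core

variable (K : Type u) [Field K] {R : Type v} [Ring R] [Algebra K R] {r N : ℕ}

/-- `a` is an eigenvector of the torus action `act` with (integral) character `f`. -/
def IsEigenWith (act : Torus K r →* (R ≃ₐ[K] R)) (f : Fin r → ℤ) (a : R) : Prop :=
  ∀ ξ : Torus K r, act ξ a = ((∏ i, ξ i ^ f i : Kˣ) : K) • a

/-- The torus action `act` is rational: every element is a finite sum of
eigenvectors whose eigenvalues are given by integral characters of the torus. -/
def IsRationalAction (act : Torus K r →* (R ≃ₐ[K] R)) : Prop :=
  ∀ a : R, ∃ (s : Finset (Fin r → ℤ)) (c : (Fin r → ℤ) → R),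
    a = ∑ f ∈ s, c f ∧ ∀ f ∈ s, IsEigenWith K act f (c f)

/-- The ordered monomial `x 0 ^ m 0 * x 1 ^ m 1 * ⋯ * x (N-1) ^ m (N-1)`. -/
def ordMonomial (x : Fin N → R) (m : Fin N → ℕ) : R :=
  ((List.finRange N).map fun k => x k ^ m k).prod

/-- The ordered monomial in the reversed order of the generators. -/
def revOrdMonomial (x : Fin N → R) (m : Fin N → ℕ) : R :=
  ((List.finRange N).reverse.map fun k => x k ^ m k).prod

/-- The subalgebra generated by the first `m` of the elements `x 0, …, x (N-1)`. -/
def Rsub (x : Fin N → R) (m : ℕ) : Subalgebra K R :=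
  Algebra.adjoin K (x '' {l : Fin N | (l : ℕ) < m})

/-- The subalgebra generated by the elements `x l` with `m < l` (for the reversed order). -/
def RsubRev (x : Fin N → R) (m : ℕ) : Subalgebra K R :=
  Algebra.adjoin K (x '' {l : Fin N | m < (l : ℕ)})

/-- The skew derivation `δ_k : a ↦ x_k a − (h_k · a) x_k` attached to the `k`-th generator. -/
def skewDelta (act : Torus K r →* (R ≃ₐ[K] R)) (x : Fin N → R) (h : Fin N → Torus K r)
    (k : Fin N) : R → R :=
  fun a => x k * a - act (h k) a * x k

end Core

/-- A quantum nilpotent algebra (CGL extension) of dimension `N`:  an iterated skew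
polynomial extension `R = K[x_1][x_2; σ_2, δ_2]⋯[x_N; σ_N, δ_N]` equipped with a rational
action of a torus `H = (Kˣ)^r` by `K`-algebra automorphisms such that the `x_k` are
`H`-eigenvectors, each `δ_k` is a locally nilpotent `σ_k`-derivation of the subalgebra
generated by `x_1, …, x_{k-1}`, and each `σ_k` is given by the action of a torus element
`h_k` whose eigenvalue `λ_k` on `x_k` is not a root of unity.  The iterated skew polynomial
presentation is encoded by the generation, linear independence of ordered monomials
(PBW basis) and the skew commutation conditions. -/
structure QNA (K : Type u) [Field K] (R : Type v) [Ring R] [Algebra K R] (N r : ℕ) where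
  x : Fin N → R
  act : Torus K r →* (R ≃ₐ[K] R)
  h : Fin N → Torus K r
  lam : Fin N → K
  rational : IsRationalAction K act
  gen : Algebra.adjoin K (Set.range x) = ⊤
  pbw : LinearIndependent K (ordMonomial (R := R) x)
  eigenvec : ∀ k : Fin N, ∃ f : Fin r → ℤ, IsEigenWith K act f (x k)
  stable : ∀ k : Fin N, ∀ a ∈ Rsub K x (k : ℕ), skewDelta K act x h k a ∈ Rsub K x (k : ℕ)
  locnil : ∀ k : Fin N, ∀ a ∈ Rsub K x (k : ℕ), ∃ n : ℕ, (skewDelta K act x h k)^[n] a = 0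
  hx : ∀ k, act (h k) (x k) = lam k • x k
  lam_not_root : ∀ k, ∀ n : ℕ, n ≠ 0 → lam k ^ n ≠ 1

/-- A symmetric quantum nilpotent algebra: a quantum nilpotent algebra which admits an
iterated skew polynomial presentation, satisfying the same axioms, also for the reversed
order `x_N, x_{N-1}, …, x_1` of the generators, with respect to torus elements `h*_k`. -/
structure SymQNA (K : Type u) [Field K] (R : Type v) [Ring R] [Algebra K R] (N r : ℕ)
    extends QNA K R N r where
  hstar : Fin N → Torus K r
  lamstar : Fin N → K
  pbwRev : LinearIndependent K (revOrdMonomial (R := R) x)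
  stableRev : ∀ k : Fin N, ∀ a ∈ RsubRev K x (k : ℕ),
    skewDelta K act x hstar k a ∈ RsubRev K x (k : ℕ)
  locnilRev : ∀ k : Fin N, ∀ a ∈ RsubRev K x (k : ℕ),
    ∃ n : ℕ, (skewDelta K act x hstar k)^[n] a = 0
  hxstar : ∀ k, act (hstar k) (x k) = lamstar k • x k
  lamstar_not_root : ∀ k, ∀ n : ℕ, n ≠ 0 → lamstar k ^ n ≠ 1

section Prime

variable (K : Type u) [Field K] {R : Type v} [Ring R] [Algebra K R] {r N : ℕ}

/-- The skew derivation `δ_k` of the `k`-th step of the presentation vanishes. -/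
def deltaZero (Q : QNA K R N r) (k : Fin N) : Prop :=
  ∀ a ∈ Rsub K Q.x (k : ℕ), skewDelta K Q.act Q.x Q.h k a = 0

/-- `p` is a prime element of the subalgebra `A`:  `p` is a nonzero noninvertible normal
element of `A` (`pA = Ap`) such that `A/Ap` is a domain. -/
def IsPrimeIn (A : Subalgebra K R) (p : R) : Prop :=
  p ∈ A ∧ p ≠ 0 ∧ (¬ ∃ u ∈ A, p * u = 1 ∧ u * p = 1) ∧
  (∀ a ∈ A, ∃ b ∈ A, a * p = p * b) ∧
  (∀ a ∈ A, ∃ b ∈ A, p * a = b * p) ∧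
  (∀ a ∈ A, ∀ b ∈ A, (∃ d ∈ A, a * b = p * d) → (∃ d ∈ A, a = p * d) ∨ (∃ d ∈ A, b = p * d))

/-- The predecessor function of the level sets of `η`:  `p(k)` is the largest `l < k`
with `η l = η k`, and `⊥` (i.e. `−∞`) if there is no such `l`. -/
def predIdx {α : Type*} [DecidableEq α] (η : Fin N → α) (k : Fin N) : WithBot (Fin N) :=
  (Finset.univ.filter fun l => l < k ∧ η l = η k).max

/-- The successor function of the level sets of `η`:  `s(k)` is the smallest `l > k`
with `η l = η k`, and `⊤` (i.e. `+∞`) if there is no such `l`. -/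
def succIdx {α : Type*} [DecidableEq α] (η : Fin N → α) (k : Fin N) : WithTop (Fin N) :=
  (Finset.univ.filter fun l => k < l ∧ η l = η k).min

/-- `(η, c, y)` is a sequence of homogeneous prime elements for the quantum nilpotent
algebra `Q` in the sense of the prime element theorem:  `y` is defined by the recursion
`y_k = y_{p(k)} x_k − c_k` (if `δ_k ≠ 0`; `y_k = x_k` if `δ_k = 0`), the `y_k` are
`H`-eigenvectors, and for every `k` the homogeneous prime elements of the subalgebra
`R_k` generated by `x_1, …, x_k` are precisely the nonzero scalar multiples of the
`y_l` with `l ≤ k` and `s(l) > k`. -/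
structure IsPrimeSeq (Q : QNA K R N r) (η : Fin N → ℤ) (c : Fin N → R) (y : Fin N → R) :
    Prop where
  c_mem : ∀ k : Fin N, ¬ deltaZero K Q k → c k ∈ Rsub K Q.x (k : ℕ)
  rec_delta_zero : ∀ k : Fin N, deltaZero K Q k → y k = Q.x k
  rec_delta_ne : ∀ k : Fin N, ¬ deltaZero K Q k →
    y k = (WithBot.recBotCoe (1 : R) (fun l => y l) (predIdx η k)) * Q.x k - c k
  homog : ∀ k : Fin N, ∃ f : Fin r → ℤ, IsEigenWith K Q.act f (y k)
  prime_iff : ∀ k : Fin N, ∀ u : R,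
    (IsPrimeIn K (Rsub K Q.x ((k : ℕ) + 1)) u ∧ ∃ f : Fin r → ℤ, IsEigenWith K Q.act f u) ↔
    (∃ l : Fin N, l ≤ k ∧ (∀ l' : Fin N, l < l' → l' ≤ k → η l' ≠ η l) ∧
      ∃ t : Kˣ, u = (t : K) • y l)

/-- The vector `ē_k = e_k + e_{p(k)} + e_{p²(k)} + ⋯ ∈ ℤ^N`. -/
def ebar (η : Fin N → ℤ) (k : Fin N) : Fin N → ℤ :=
  fun l => if l ≤ k ∧ η l = η k then 1 else 0

/-- The multiplicatively skewsymmetric matrix of eigenvalues:  `1` on the diagonal,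
`λ_{kl}` below it and `λ_{lk}⁻¹` above it. -/
def omegaEntry (lam2 : Fin N → Fin N → Kˣ) (k l : Fin N) : Kˣ :=
  if k = l then 1 else if l < k then lam2 k l else (lam2 l k)⁻¹

/-- The unique group bicharacter `Ω : ℤ^N × ℤ^N → Kˣ` with `Ω(e_k, e_l)` equal to `1`,
`λ_{kl}`, `λ_{lk}⁻¹` according as `k = l`, `k > l`, `k < l`. -/
def Omega (lam2 : Fin N → Fin N → Kˣ) (f g : Fin N → ℤ) : Kˣ :=
  ∏ k, ∏ l, (omegaEntry K lam2 k l) ^ (f k * g l)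

/-- The set of exchangeable indices: those `k` with `s(k) ≠ +∞`. -/
def exSet (η : Fin N → ℤ) : Finset (Fin N) :=
  Finset.univ.filter fun k => ∃ l, k < l ∧ η l = η k

/-- Condition (A): `K` contains square roots of the scalars `λ_{kl}` such that the
subgroup of `Kˣ` generated by all of them contains no elements of order 2. -/
def CondA (lam2 : Fin N → Fin N → Kˣ) : Prop :=
  ∃ sq : Fin N → Fin N → Kˣ, (∀ k l : Fin N, l < k → sq k l ^ 2 = lam2 k l) ∧
    ∀ g ∈ Subgroup.closure {u : Kˣ | ∃ k l : Fin N, l < k ∧ u = sq k l}, g ^ 2 = 1 → g = 1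

/-- Condition (B): there exist positive integers `d_n`, `n ∈ range η`, such that
`(λ*_k)^{d_{η(l)}} = (λ*_l)^{d_{η(k)}}` for all exchangeable `k, l`. -/
def CondB (η : Fin N → ℤ) (lamstar : Fin N → K) : Prop :=
  ∃ d : ℤ → ℕ, (∀ n ∈ Set.range η, 0 < d n) ∧
    ∀ k ∈ exSet η, ∀ l ∈ exSet η, lamstar k ^ d (η l) = lamstar l ^ d (η k)

/-- The defining conditions for the exchange matrix `B̃ ∈ M_{N×ex}(ℤ)`:  columns indexed
outside `ex` vanish; `Ω(Σ_l b_{lk} ē_l, ē_n)` equals `λ*_n` for `k = n` and `1` otherwise;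
and the products `y_1^{b_{1k}} ⋯ y_N^{b_{Nk}}` are fixed under `H`, i.e. the characters
`χ_{y_l}` of the `y_l` satisfy `Σ_l b_{lk} χ_{y_l} = 0`. -/
def IsExchangeMatrix (lam2 : Fin N → Fin N → Kˣ) (η : Fin N → ℤ) (lamstar : Fin N → K)
    (chiy : Fin N → Fin r → ℤ) (B : Fin N → Fin N → ℤ) : Prop :=
  (∀ k : Fin N, k ∉ exSet η → ∀ l, B l k = 0) ∧
  (∀ k ∈ exSet η, ∀ n : Fin N,
    ((Omega K lam2 (fun j => ∑ l, B l k * ebar η l j) (ebar η n) : Kˣ) : K) =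
      (if k = n then lamstar n else 1)) ∧
  (∀ k ∈ exSet η, ∀ i : Fin r, (∑ l, B l k * chiy l i) = 0)

/-- `ι : R →ₐ[K] D` realizes the division ring `D` as the division ring of fractions
`Fract R`:  `ι` is injective and every element of `D` is a right fraction `ι(a) ι(b)⁻¹`. -/
def IsFractionEmb {D : Type v} [DivisionRing D] [Algebra K D] (ι : R →ₐ[K] D) : Prop :=
  Function.Injective ι ∧ ∀ d : D, ∃ a b : R, b ≠ 0 ∧ d * ι b = ι a

end Prime
namespace QN

section Ore
variable {K : Type u} [Field K] {R : Type v} [Ring R] [Algebra K R]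

/-- Elements of degree `< n` in `x` with coefficients (on the left) in `A`. -/
def Fil (A : Subalgebra K R) (x : R) : ℕ → Submodule K R
  | 0 => ⊥
  | n + 1 => Fil A x n ⊔ (Subalgebra.toSubmodule A).map (LinearMap.mulRight K (x ^ n))

theorem mem_Fil_succ {A : Subalgebra K R} {x : R} {n : ℕ} {w : R} :
    w ∈ Fil A x (n + 1) ↔ ∃ a ∈ A, w - a * x ^ n ∈ Fil A x n := by
  rw [Fil, Submodule.mem_sup]
  constructor
  · rintro ⟨y, hy, z, ⟨a, ha, rfl⟩, rfl⟩
    exact ⟨a, ha, by simpa using hy⟩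
  · rintro ⟨a, ha, h⟩
    exact ⟨_, h, a * x ^ n, ⟨a, ha, rfl⟩, by simp⟩

theorem mem_Fil_zero {A : Subalgebra K R} {x : R} {w : R} : w ∈ Fil A x 0 ↔ w = 0 := by
  rw [Fil, Submodule.mem_bot]

theorem mem_Fil_one {A : Subalgebra K R} {x : R} {w : R} : w ∈ Fil A x 1 ↔ w ∈ A := by
  rw [mem_Fil_succ]
  constructor
  · rintro ⟨a, ha, h⟩
    rw [mem_Fil_zero] at h
    have : w = a := by simpa [sub_eq_zero] using h
    rwa [this]
  · intro h
    exact ⟨w, h, by simp⟩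

theorem Fil_le_succ (A : Subalgebra K R) (x : R) (n : ℕ) : Fil A x n ≤ Fil A x (n + 1) := by
  rw [Fil]; exact le_sup_left

theorem Fil_mono {A : Subalgebra K R} {x : R} : Monotone (Fil A x) :=
  monotone_nat_of_le_succ (Fil_le_succ A x)

theorem mul_pow_mem_Fil {A : Subalgebra K R} {x a : R} (ha : a ∈ A) (n : ℕ) :
    a * x ^ n ∈ Fil A x (n + 1) := mem_Fil_succ.2 ⟨a, ha, by simp⟩

theorem Fil_le_of_le {A A' : Subalgebra K R} (h : A ≤ A') (x : R) (n : ℕ) :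
    Fil A x n ≤ Fil A' x n := by
  induction n with
  | zero => exact le_refl _
  | succ n ih =>
    intro w hw
    obtain ⟨a, ha, h2⟩ := mem_Fil_succ.1 hw
    exact mem_Fil_succ.2 ⟨a, h ha, ih h2⟩

theorem mem_Fil_two {A : Subalgebra K R} {x : R} {w : R} :
    w ∈ Fil A x 2 ↔ ∃ a ∈ A, ∃ b ∈ A, w = a * x + b := by
  rw [mem_Fil_succ]
  constructor
  · rintro ⟨a, ha, h⟩
    rw [mem_Fil_one] at h
    exact ⟨a, ha, _, h, by simp⟩
  · rintro ⟨a, ha, b, hb, rfl⟩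
    exact ⟨a, ha, mem_Fil_one.2 (by simpa using hb)⟩

structure OreC (A : Subalgebra K R) (x : R) (σ : R ≃ₐ[K] R) : Prop where
  map : ∀ a ∈ A, σ a ∈ A
  mapinv : ∀ a ∈ A, σ.symm a ∈ A
  comm : ∀ a ∈ A, x * a - σ a * x ∈ A

structure OreD (A : Subalgebra K R) (x : R) (σ : R ≃ₐ[K] R) : Prop extends OreC A x σ where
  indep : ∀ n, ∀ a ∈ A, a * x ^ n ∈ Fil A x n → a = 0

variable {A : Subalgebra K R} {x : R} {σ : R ≃ₐ[K] R}

theorem left_mem_Fil {a w : R} {n : ℕ} (ha : a ∈ A) (hw : w ∈ Fil A x n) :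
    a * w ∈ Fil A x n := by
  induction n generalizing w with
  | zero => rw [mem_Fil_zero] at *; simp [hw]
  | succ n ih =>
    obtain ⟨b, hb, h⟩ := mem_Fil_succ.1 hw
    refine mem_Fil_succ.2 ⟨a * b, mul_mem ha hb, ?_⟩
    have := ih h
    rwa [mul_sub, ← mul_assoc] at this

theorem Fil_mul_x {w : R} {n : ℕ} (hw : w ∈ Fil A x n) : w * x ∈ Fil A x (n + 1) := by
  induction n generalizing w with
  | zero => rw [mem_Fil_zero] at hw; simp [hw]
  | succ n ih =>
    obtain ⟨b, hb, h⟩ := mem_Fil_succ.1 hw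
    refine mem_Fil_succ.2 ⟨b, hb, ?_⟩
    have := ih h
    rwa [sub_mul, mul_assoc, ← pow_succ] at this

theorem Fil_mul_x_pow {w : R} {n : ℕ} (hw : w ∈ Fil A x n) (m : ℕ) :
    w * x ^ m ∈ Fil A x (n + m) := by
  induction m with
  | zero => simpa using hw
  | succ m ih => rw [pow_succ, ← mul_assoc]; exact Fil_mul_x ih

namespace OreC

theorem x_mul (O : OreC A x σ) {w : R} {n : ℕ} (hw : w ∈ Fil A x n) : x * w ∈ Fil A x (n + 1) := by
  induction n generalizing w with
  | zero => rw [mem_Fil_zero] at hw; simp [hw]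
  | succ n ih =>
    obtain ⟨b, hb, h⟩ := mem_Fil_succ.1 hw
    refine mem_Fil_succ.2 ⟨σ b, O.map b hb, ?_⟩
    have h1 := ih h
    have h2 := mul_pow_mem_Fil (x := x) (O.comm b hb) n
    have h3 := add_mem h1 h2
    convert h3 using 1
    rw [pow_succ']; noncomm_ring

theorem x_pow_mul (O : OreC A x σ) {w : R} {n : ℕ} (hw : w ∈ Fil A x n) (m : ℕ) :
    x ^ m * w ∈ Fil A x (n + m) := by
  induction m with
  | zero => simpa using hw
  | succ m ih => rw [pow_succ', mul_assoc]; exact O.x_mul ih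

theorem iter_mem (O : OreC A x σ) {a : R} (ha : a ∈ A) (n : ℕ) : σ^[n] a ∈ A := by
  induction n with
  | zero => exact ha
  | succ n ih => rw [Function.iterate_succ_apply']; exact O.map _ ih

theorem iterinv_mem (O : OreC A x σ) {a : R} (ha : a ∈ A) (n : ℕ) : (σ.symm)^[n] a ∈ A := by
  induction n with
  | zero => exact ha
  | succ n ih => rw [Function.iterate_succ_apply']; exact O.mapinv _ ih

theorem pow_comm (O : OreC A x σ) {a : R} (ha : a ∈ A) (n : ℕ) : x ^ n * a - σ^[n] a * x ^ n ∈ Fil A x n := by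
  induction n with
  | zero => simp
  | succ n ih =>
    have h1 := O.x_mul ih
    have h2 := mul_pow_mem_Fil (x := x) (O.comm _ (O.iter_mem ha n)) n
    have h3 := add_mem h1 h2
    convert h3 using 1
    rw [pow_succ', Function.iterate_succ_apply']; noncomm_ring

theorem mul_mem_Fil (O : OreC A x σ) {w z : R} {n m : ℕ} (hw : w ∈ Fil A x n) (hz : z ∈ Fil A x (m + 1)) :
    w * z ∈ Fil A x (n + m) := by
  induction n generalizing w with
  | zero => rw [mem_Fil_zero] at hw; simp [hw]
  | succ n ih =>
    obtain ⟨b, hb, h⟩ := mem_Fil_succ.1 hw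
    have h1 := Fil_mono (show n + m ≤ n + 1 + m by omega) (ih h)
    have h2 := left_mem_Fil hb (O.x_pow_mul hz n)
    rw [show m + 1 + n = n + 1 + m by omega] at h2
    have h3 := add_mem h1 h2
    convert h3 using 1
    noncomm_ring

theorem mul_top (O : OreC A x σ) {w z a b : R} {n m : ℕ} (ha : a ∈ A) (hb : b ∈ A)
    (hw : w - a * x ^ n ∈ Fil A x n) (hz : z - b * x ^ m ∈ Fil A x m) :
    w * z - a * σ^[n] b * x ^ (n + m) ∈ Fil A x (n + m) := by
  have hz' : z ∈ Fil A x (m + 1) := mem_Fil_succ.2 ⟨b, hb, hz⟩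
  have h1 := O.mul_mem_Fil hw hz'
  have h2 := left_mem_Fil ha (O.x_pow_mul hz n)
  rw [show m + n = n + m by omega] at h2
  have h3 := left_mem_Fil ha (Fil_mul_x_pow (O.pow_comm hb n) m)
  have h4 := add_mem (add_mem h1 h2) h3
  convert h4 using 1
  rw [pow_add]; noncomm_ring

theorem ext_of_adjoin (O : OreC A x σ) {T : Set R} (hT : ∀ s ∈ T, s ∈ A ∨ s = x) {w : R}
    (hw : w ∈ Algebra.adjoin K T) : ∃ n, w ∈ Fil A x n := by
  induction hw using Algebra.adjoin_induction with
  | mem s hs =>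
    rcases hT s hs with h | rfl
    · exact ⟨1, mem_Fil_one.2 h⟩
    · exact ⟨2, mem_Fil_two.2 ⟨1, one_mem _, 0, zero_mem _, by simp⟩⟩
  | algebraMap c => exact ⟨1, mem_Fil_one.2 (algebraMap_mem _ _)⟩
  | add y z _ _ hy hz =>
    obtain ⟨n, hn⟩ := hy
    obtain ⟨m, hm⟩ := hz
    exact ⟨max n m, add_mem (Fil_mono (le_max_left _ _) hn) (Fil_mono (le_max_right _ _) hm)⟩
  | mul y z _ _ hy hz =>
    obtain ⟨n, hn⟩ := hy
    obtain ⟨m, hm⟩ := hz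
    exact ⟨n + m, O.mul_mem_Fil hn (Fil_le_succ _ _ _ hm)⟩

/-- Coefficients can be moved to the right of powers of `x`. -/
theorem Fil_induction_left (O : OreC A x σ) {P : R → Prop} (h0 : P 0) (hadd : ∀ y z, P y → P z → P (y + z))
    (hm : ∀ n, ∀ a ∈ A, P (x ^ n * a)) {n : ℕ} {w : R} (hw : w ∈ Fil A x n) : P w := by
  induction n generalizing w with
  | zero => rw [mem_Fil_zero] at hw; rwa [hw]
  | succ n ih =>
    obtain ⟨b, hb, h⟩ := mem_Fil_succ.1 hw
    have hmem : (σ.symm)^[n] b ∈ A := O.iterinv_mem hb n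
    have h1 := O.pow_comm hmem n
    have h2 : σ^[n] ((σ.symm)^[n] b) = b :=
      (Function.LeftInverse.iterate (fun y => σ.apply_symm_apply y) n) b
    rw [h2] at h1
    have h3 := ih (sub_mem h h1)
    have h4 := hadd _ _ (hm n _ hmem) h3
    convert h4 using 1
    noncomm_ring

end OreC

namespace OreD

theorem top_unique (O : OreD A x σ) {w a a' : R} {n : ℕ} (ha : a ∈ A) (ha' : a' ∈ A)
    (h : w - a * x ^ n ∈ Fil A x n) (h' : w - a' * x ^ n ∈ Fil A x n) : a = a' := by
  have h1 := sub_mem h' h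
  have h2 := O.indep n (a - a') (sub_mem ha ha') (by convert h1 using 1; noncomm_ring)
  exact sub_eq_zero.1 h2

theorem top_zero (O : OreD A x σ) {w a : R} {n : ℕ} (ha : a ∈ A)
    (h : w - a * x ^ n ∈ Fil A x n) (hw : w ∈ Fil A x n) : a = 0 :=
  O.top_unique ha (zero_mem _) h (by simpa using hw)

/-- uniqueness in degree one -/
theorem lin_unique (O : OreD A x σ) {a b a' b' : R} (ha : a ∈ A) (hb : b ∈ A) (ha' : a' ∈ A) (hb' : b' ∈ A)
    (h : a * x + b = a' * x + b') : a = a' ∧ b = b' := by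
  have h1 : a = a' := by
    refine O.top_unique (w := a * x + b) (n := 1) ha ha' ?_ ?_
    · exact mem_Fil_one.2 (by simpa using hb)
    · rw [h]; exact mem_Fil_one.2 (by simpa using hb')
  subst h1
  exact ⟨rfl, by simpa using h⟩

theorem lin_zero (O : OreD A x σ) {a b : R} (ha : a ∈ A) (hb : b ∈ A)
    (h : a * x + b = 0) : a = 0 ∧ b = 0 :=
  O.lin_unique ha hb (zero_mem _) (zero_mem _) (by simpa using h)

theorem quad_unique (O : OreD A x σ) {a b c a' b' c' : R} (ha : a ∈ A) (hb : b ∈ A) (hc : c ∈ A)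
    (ha' : a' ∈ A) (hb' : b' ∈ A) (hc' : c' ∈ A)
    (h : a * x ^ 2 + b * x + c = a' * x ^ 2 + b' * x + c') : a = a' ∧ b = b' ∧ c = c' := by
  have h1 : a = a' := by
    refine O.top_unique (w := a * x ^ 2 + b * x + c) (n := 2) ha ha' ?_ ?_
    · exact mem_Fil_two.2 ⟨b, hb, c, hc, by noncomm_ring⟩
    · rw [h]; exact mem_Fil_two.2 ⟨b', hb', c', hc', by noncomm_ring⟩
  subst h1
  refine ⟨rfl, O.lin_unique hb hc hb' hc' ?_⟩
  have h2 : a * x ^ 2 + (b * x + c) = a * x ^ 2 + (b' * x + c') := by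
    rw [← add_assoc, ← add_assoc]; exact h
  exact add_left_cancel h2

theorem restrict_Fil (O : OreD A x σ) {A0 : Subalgebra K R} (h0 : A0 ≤ A) {w : R} {m n : ℕ}
    (hw : w ∈ Fil A0 x m) (hw' : w ∈ Fil A x n) : w ∈ Fil A0 x n := by
  induction m with
  | zero => exact Fil_mono (Nat.zero_le n) hw
  | succ q ih =>
    by_cases hq : q + 1 ≤ n
    · exact Fil_mono hq hw
    obtain ⟨b, hb, h⟩ := mem_Fil_succ.1 hw
    have hb0 : b = 0 := O.top_zero (h0 hb) (Fil_le_of_le h0 _ _ h)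
      (Fil_mono (show n ≤ q by omega) hw')
    apply ih
    simpa [hb0] using h

theorem sub (O : OreD A x σ) {A0 : Subalgebra K R} (h0 : A0 ≤ A) (O0 : OreC A0 x σ) : OreD A0 x σ :=
  { O0 with
    indep := fun n a ha h => O.indep n a (h0 ha) (Fil_le_of_le h0 _ _ h) }

variable [NoZeroDivisors R]

theorem deg (O : OreD A x σ) {w a b : R} {n m p : ℕ} (ha : a ∈ A) (ha0 : a ≠ 0)
    (hw : w - a * x ^ n ∈ Fil A x n) (hb : b ∈ Fil A x p) (h : w * b ∈ Fil A x (n + m)) :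
    b ∈ Fil A x m := by
  induction p with
  | zero => exact Fil_mono (Nat.zero_le m) hb
  | succ q ih =>
    by_cases hq : q + 1 ≤ m
    · exact Fil_mono hq hb
    obtain ⟨c, hc, h'⟩ := mem_Fil_succ.1 hb
    have h1 := O.mul_top ha hc hw h'
    have h2 := O.top_zero (mul_mem ha (O.iter_mem hc n)) h1
      (Fil_mono (show n + m ≤ n + q by omega) h)
    have h3 : c = 0 := by
      rcases mul_eq_zero.1 h2 with h | h
      · exact absurd h ha0
      · have : σ^[n] c = σ^[n] 0 := by rw [h]; simp
        exact (σ.injective.iterate n) this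
    apply ih
    simpa [h3] using h'

end OreD

theorem OreD.domain (O : OreD A x σ) (hA : ∀ a ∈ A, ∀ b ∈ A, a * b = 0 → a = 0 ∨ b = 0)
    {n m : ℕ} {w z : R} (hw : w ∈ Fil A x n) (hz : z ∈ Fil A x m) (h : w * z = 0) :
    w = 0 ∨ z = 0 := by
  induction n with
  | zero => left; exact mem_Fil_zero.1 hw
  | succ n ihn =>
    induction m with
    | zero => right; exact mem_Fil_zero.1 hz
    | succ m ihm =>
      obtain ⟨a, ha, h1⟩ := mem_Fil_succ.1 hw
      obtain ⟨b, hb, h2⟩ := mem_Fil_succ.1 hz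
      have h3 := O.top_zero (mul_mem ha (O.iter_mem hb n)) (O.mul_top ha hb h1 h2)
        (by rw [h]; exact zero_mem _)
      rcases hA _ ha _ (O.iter_mem hb n) h3 with h4 | h4
      · exact ihn (by simpa [h4] using h1)
      · have h5 : b = 0 := by
          have : σ^[n] b = σ^[n] 0 := by rw [h4]; simp
          exact (σ.injective.iterate n) this
        exact ihm (by simpa [h5] using h2)

end Ore
end QN

namespace QN

section PBW
variable {K : Type u} [Field K] {R : Type v} [Ring R] [Algebra K R] {N r : ℕ}

theorem list_mono_mul (x : Fin N → R) (m1 m2 : Fin N → ℕ) (b : ℕ) (h1 : ∀ t, m1 t ≠ 0 → (t : ℕ) ≤ b)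
    (h2 : ∀ t, m2 t ≠ 0 → b ≤ (t : ℕ)) (l : List (Fin N)) (hl : l.Pairwise (· < ·)) :
    (l.map fun k => x k ^ m1 k).prod * (l.map fun k => x k ^ m2 k).prod =
      (l.map fun k => x k ^ (m1 + m2) k).prod := by
  induction l with
  | nil => simp
  | cons k l ih =>
    rw [List.pairwise_cons] at hl
    have ih := ih hl.2
    simp only [List.map_cons, List.prod_cons, Pi.add_apply]
    simp only [Pi.add_apply] at ih
    by_cases hk : (k : ℕ) < b
    · have : m2 k = 0 := by
        by_contra hne
        exact absurd (h2 k hne) (by omega)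
      rw [this]
      simp only [pow_zero, one_mul, add_zero]
      rw [mul_assoc, ih]
    · have h0 : ∀ t ∈ l, m1 t = 0 := by
        intro t ht
        by_contra hne
        have a1 := h1 t hne
        have a2 : (k : ℕ) < t := hl.1 t ht
        omega
      have e1 : (l.map fun k => x k ^ m1 k).prod = 1 := by
        rw [List.prod_eq_one]
        intro y hy
        obtain ⟨t, ht, rfl⟩ := List.mem_map.1 hy
        simp [h0 t ht]
      rw [e1, one_mul] at ih
      rw [e1, mul_one, ← mul_assoc, ← pow_add, ih]

theorem mono_mul (x : Fin N → R) (m1 m2 : Fin N → ℕ) (b : ℕ) (h1 : ∀ t, m1 t ≠ 0 → (t : ℕ) ≤ b)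
    (h2 : ∀ t, m2 t ≠ 0 → b ≤ (t : ℕ)) :
    ordMonomial x m1 * ordMonomial x m2 = ordMonomial x (m1 + m2) :=
  list_mono_mul x m1 m2 b h1 h2 _ (List.pairwise_lt_finRange N)

theorem mono_single (x : Fin N → R) (l : Fin N) (n : ℕ) :
    ordMonomial x (Pi.single l n) = x l ^ n := by
  unfold ordMonomial
  rw [List.prod_map_eq_pow_single l]
  · rw [List.count_eq_one_of_mem (List.nodup_finRange N) (List.mem_finRange l)]
    simp
  · intro a ha _
    simp [Pi.single_eq_of_ne ha]

theorem mono_zero (x : Fin N → R) : ordMonomial x 0 = 1 := by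
  unfold ordMonomial
  rw [List.prod_eq_one]
  simp

/-- span of monomials with exponents in `T` -/
def Sp (K : Type u) [Field K] {R : Type v} [Ring R] [Algebra K R] {N : ℕ} (x : Fin N → R)
    (T : Set (Fin N → ℕ)) : Submodule K R :=
  Submodule.span K (ordMonomial x '' T)

theorem Sp_mono (x : Fin N → R) {T T' : Set (Fin N → ℕ)} (h : T ⊆ T') : Sp K x T ≤ Sp K x T' :=
  Submodule.span_mono (Set.image_mono h)

theorem Sp_mul (x : Fin N → R) {T1 T2 T : Set (Fin N → ℕ)}
    (h : ∀ m1 ∈ T1, ∀ m2 ∈ T2, ordMonomial x m1 * ordMonomial x m2 ∈ Sp K x T) {a b : R}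
    (ha : a ∈ Sp K x T1) (hb : b ∈ Sp K x T2) : a * b ∈ Sp K x T := by
  have : Sp K x T1 * Sp K x T2 ≤ Sp K x T := by
    unfold Sp
    rw [Submodule.span_mul_span, Submodule.span_le]
    rintro _ ⟨_, ⟨m1, h1, rfl⟩, _, ⟨m2, h2, rfl⟩, rfl⟩
    exact h m1 h1 m2 h2
  exact this (Submodule.mul_mem_mul ha hb)

theorem mono_mem_Sp (x : Fin N → R) {T : Set (Fin N → ℕ)} {m : Fin N → ℕ} (h : m ∈ T) :
    ordMonomial x m ∈ Sp K x T := Submodule.subset_span ⟨m, h, rfl⟩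

theorem Sp_inter {x : Fin N → R} (hx : LinearIndependent K (ordMonomial (R := R) x))
    {T1 T2 : Set (Fin N → ℕ)} {a : R} (h1 : a ∈ Sp K x T1) (h2 : a ∈ Sp K x T2) :
    a ∈ Sp K x (T1 ∩ T2) := by
  unfold Sp at *
  rw [Finsupp.mem_span_image_iff_linearCombination] at *
  obtain ⟨f, hf, hfa⟩ := h1
  obtain ⟨g, hg, hga⟩ := h2
  have : f = g := hx (hfa.trans hga.symm)
  subst this
  refine ⟨f, ?_, hfa⟩
  rw [Finsupp.mem_supported] at *
  exact Set.subset_inter hf hg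

theorem Sp_disj {x : Fin N → R} (hx : LinearIndependent K (ordMonomial (R := R) x))
    {T1 T2 : Set (Fin N → ℕ)} (hT : ∀ m ∈ T1, m ∉ T2) {a : R} (h1 : a ∈ Sp K x T1)
    (h2 : a ∈ Sp K x T2) : a = 0 := by
  have h := Sp_inter hx h1 h2
  have : T1 ∩ T2 = ∅ := by
    ext m; simp only [Set.mem_inter_iff, Set.mem_empty_iff_false, iff_false]
    exact fun hm => hT m hm.1 hm.2
  rw [this] at h
  simpa [Sp] using h

/-- subalgebra generated by an interval of generators -/
def I (K : Type u) [Field K] {R : Type v} [Ring R] [Algebra K R] {N : ℕ} (x : Fin N → R)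
    (a b : ℕ) : Subalgebra K R :=
  Algebra.adjoin K (x '' {t : Fin N | a ≤ (t : ℕ) ∧ (t : ℕ) < b})

theorem Rsub_eq (x : Fin N → R) (b : ℕ) : Rsub K x b = I K x 0 b := by
  unfold Rsub I; simp

theorem RsubRev_eq (x : Fin N → R) (b : ℕ) : RsubRev K x b = I K x (b + 1) N := by
  unfold RsubRev I
  congr 2
  ext t
  simp only [Set.mem_ofPred_eq]
  omega

theorem I_mono (x : Fin N → R) {a a' b b' : ℕ} (ha : a' ≤ a) (hb : b ≤ b') :
    I K x a b ≤ I K x a' b' := by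
  unfold I
  apply Algebra.adjoin_mono
  apply Set.image_mono
  intro t ht
  simp only [Set.mem_ofPred_eq] at *
  omega

theorem x_mem (x : Fin N → R) {a b : ℕ} (t : Fin N) (h1 : a ≤ (t : ℕ)) (h2 : (t : ℕ) < b) :
    x t ∈ I K x a b := Algebra.subset_adjoin ⟨t, ⟨h1, h2⟩, rfl⟩

theorem I_self (x : Fin N → R) {a b : ℕ} (hab : b ≤ a) {w : R} (hw : w ∈ I K x a b) :
    ∃ s : K, w = algebraMap K R s := by
  unfold I at hw
  have : {t : Fin N | a ≤ (t : ℕ) ∧ (t : ℕ) < b} = ∅ := by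
    ext t; simp only [Set.mem_ofPred_eq, Set.mem_empty_iff_false, iff_false]; omega
  rw [this, Set.image_empty, Algebra.adjoin_empty] at hw
  obtain ⟨s, hs⟩ := Algebra.mem_bot.1 hw
  exact ⟨s, hs.symm⟩

theorem mono_mem_I (x : Fin N → R) {a b : ℕ} {m : Fin N → ℕ}
    (hm : ∀ t, m t ≠ 0 → a ≤ (t : ℕ) ∧ (t : ℕ) < b) : ordMonomial x m ∈ I K x a b := by
  unfold ordMonomial
  apply Subalgebra.list_prod_mem
  intro y hy
  obtain ⟨t, _, rfl⟩ := List.mem_map.1 hy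
  by_cases h : m t = 0
  · simp [h]
  · exact pow_mem (x_mem x t (hm t h).1 (hm t h).2) _

theorem Sp_le_I (x : Fin N → R) {a b : ℕ} {T : Set (Fin N → ℕ)}
    (hT : ∀ m ∈ T, ∀ t, m t ≠ 0 → a ≤ (t : ℕ) ∧ (t : ℕ) < b) {w : R} (hw : w ∈ Sp K x T) :
    w ∈ I K x a b := by
  have : Sp K x T ≤ Subalgebra.toSubmodule (I K x a b) := by
    unfold Sp
    rw [Submodule.span_le]
    rintro _ ⟨m, hm, rfl⟩
    exact mono_mem_I x (hT m hm)
  exact this hw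

end PBW

section Q
variable {K : Type u} [Field K] {R : Type v} [Ring R] [Algebra K R] {N r : ℕ}
variable (Q : QNA K R N r)

theorem act_x (ξ : Torus K r) (t : Fin N) : ∃ s : K, s ≠ 0 ∧ Q.act ξ (Q.x t) = s • Q.x t := by
  obtain ⟨f, hf⟩ := Q.eigenvec t
  exact ⟨_, Units.ne_zero _, hf ξ⟩

theorem act_mem (ξ : Torus K r) {a b : ℕ} {w : R} (hw : w ∈ I K Q.x a b) :
    Q.act ξ w ∈ I K Q.x a b := by
  unfold I at hw
  induction hw using Algebra.adjoin_induction with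
  | mem y hy =>
    obtain ⟨t, ht, rfl⟩ := hy
    obtain ⟨s, _, hs⟩ := act_x Q ξ t
    rw [hs]
    exact Subalgebra.smul_mem _ (x_mem Q.x t ht.1 ht.2) s
  | algebraMap c => simp [AlgEquiv.commutes]
  | add y z _ _ hy hz => rw [map_add]; exact add_mem hy hz
  | mul y z _ _ hy hz => rw [map_mul]; exact mul_mem hy hz

theorem act_symm (ξ : Torus K r) (w : R) : (Q.act ξ).symm w = Q.act ξ⁻¹ w := by
  rw [map_inv]; rfl

theorem oreC_L (l : Fin N) : OreC (I K Q.x 0 l) (Q.x l) (Q.act (Q.h l)) where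
  map a ha := act_mem Q _ ha
  mapinv a ha := by rw [act_symm]; exact act_mem Q _ ha
  comm a ha := by
    have := Q.stable l a (by rwa [Rsub_eq])
    rw [Rsub_eq] at this
    exact this

theorem I_succ_cases (x : Fin N → R) (a : ℕ) (l : Fin N) :
    ∀ s ∈ x '' {t : Fin N | a ≤ (t : ℕ) ∧ (t : ℕ) < l + 1}, s ∈ I K x a l ∨ s = x l := by
  rintro _ ⟨t, ht, rfl⟩
  simp only [Set.mem_ofPred_eq] at ht
  rcases Nat.lt_or_ge (t : ℕ) l with h | h
  · left; exact x_mem x t ht.1 h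
  · right
    have : t = l := Fin.ext (by omega)
    rw [this]

theorem I_pred_cases (x : Fin N → R) (b : ℕ) (l : Fin N) :
    ∀ s ∈ x '' {t : Fin N | (l : ℕ) ≤ (t : ℕ) ∧ (t : ℕ) < b}, s ∈ I K x (l + 1) b ∨ s = x l := by
  rintro _ ⟨t, ht, rfl⟩
  simp only [Set.mem_ofPred_eq] at ht
  rcases Nat.lt_or_ge (l : ℕ) t with h | h
  · left; exact x_mem x t h ht.2
  · right
    have : t = l := Fin.ext (by omega)
    rw [this]

theorem Fil_le_I_succ (x : Fin N → R) (a : ℕ) (l : Fin N) (hal : a ≤ l) (n : ℕ) {w : R}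
    (hw : w ∈ Fil (I K x a l) (x l) n) : w ∈ I K x a (l + 1) := by
  induction n generalizing w with
  | zero => rw [mem_Fil_zero] at hw; rw [hw]; exact zero_mem _
  | succ n ih =>
    obtain ⟨c, hc, h⟩ := mem_Fil_succ.1 hw
    have := add_mem (ih h) (mul_mem (I_mono x le_rfl (Nat.le_succ _) hc)
      (pow_mem (x_mem x l hal (Nat.lt_succ_self _)) n))
    simpa using this

theorem Fil_le_I_pred (x : Fin N → R) (b : ℕ) (l : Fin N) (hal : l < b) (n : ℕ) {w : R}
    (hw : w ∈ Fil (I K x (l + 1) b) (x l) n) : w ∈ I K x l b := by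
  induction n generalizing w with
  | zero => rw [mem_Fil_zero] at hw; rw [hw]; exact zero_mem _
  | succ n ih =>
    obtain ⟨c, hc, h⟩ := mem_Fil_succ.1 hw
    have := add_mem (ih h) (mul_mem (I_mono x (Nat.le_succ _) le_rfl hc)
      (pow_mem (x_mem x l le_rfl hal) n))
    simpa using this

theorem mul_pow_mem_Sp (x : Fin N → R) (l : Fin N) (n : ℕ) {a : R}
    (ha : a ∈ Sp K x {m | ∀ t, m t ≠ 0 → (t : ℕ) < l}) :
    a * x l ^ n ∈ Sp K x {m | m l = n ∧ ∀ t, m t ≠ 0 → (t : ℕ) < l + 1} := by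
  refine Sp_mul x (T2 := {Pi.single l n}) ?_ ha ?_
  · rintro m1 h1 m2 rfl
    rw [mono_mul x m1 _ l (fun t ht => le_of_lt (h1 t ht))]
    · apply mono_mem_Sp
      have h0 : m1 l = 0 := by
        by_contra h
        exact absurd (h1 l h) (lt_irrefl _)
      refine ⟨by simp [h0], ?_⟩
      intro t ht
      by_cases htl : t = l
      · subst htl; exact Nat.lt_succ_self _
      · have : m1 t ≠ 0 := by simpa [htl] using ht
        exact Nat.lt_succ_of_lt (h1 t this)
    · intro t ht
      by_cases htl : t = l
      · rw [htl]
      · simp [htl] at ht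
  · rw [← mono_single x l n]; exact mono_mem_Sp x rfl

theorem Fil_le_Sp (x : Fin N → R) (l : Fin N) {A : Subalgebra K R}
    (hA : ∀ a ∈ A, a ∈ Sp K x {m | ∀ t, m t ≠ 0 → (t : ℕ) < l}) (n : ℕ) {w : R}
    (hw : w ∈ Fil A (x l) n) :
    w ∈ Sp K x {m | m l < n ∧ ∀ t, m t ≠ 0 → (t : ℕ) < l + 1} := by
  induction n generalizing w with
  | zero => rw [mem_Fil_zero] at hw; rw [hw]; exact zero_mem _
  | succ n ih =>
    obtain ⟨b, hb, h⟩ := mem_Fil_succ.1 hw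
    have h1 := Sp_mono x (T' := {m | m l < n + 1 ∧ ∀ t, m t ≠ 0 → (t : ℕ) < l + 1})
      (fun m hm => ⟨Nat.lt_succ_of_lt hm.1, hm.2⟩) (ih h)
    have h2 := Sp_mono x (T' := {m | m l < n + 1 ∧ ∀ t, m t ≠ 0 → (t : ℕ) < l + 1})
      (fun m hm => ⟨by have := hm.1; omega, hm.2⟩) (mul_pow_mem_Sp x l n (hA b hb))
    have := add_mem h1 h2
    simpa using this

theorem L_span (b : ℕ) {w : R} (hw : w ∈ I K Q.x 0 b) :
    w ∈ Sp K Q.x {m | ∀ t, m t ≠ 0 → (t : ℕ) < b} := by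
  induction b generalizing w with
  | zero =>
    obtain ⟨s, rfl⟩ := I_self Q.x le_rfl hw
    rw [Algebra.algebraMap_eq_smul_one, ← mono_zero Q.x]
    exact Submodule.smul_mem _ _ (mono_mem_Sp _ (by simp))
  | succ b ih =>
    by_cases hb : b < N
    · obtain ⟨n, hn⟩ := (oreC_L Q ⟨b, hb⟩).ext_of_adjoin (I_succ_cases Q.x 0 ⟨b, hb⟩) hw
      have := Fil_le_Sp Q.x ⟨b, hb⟩ (fun a ha => ih ha) n hn
      exact Sp_mono _ (fun m hm => hm.2) this
    · have hw' : w ∈ I K Q.x 0 b := by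
        have : I K Q.x 0 (b + 1) = I K Q.x 0 b := by
          unfold I; congr 2; ext t; simp only [Set.mem_ofPred_eq]; omega
        rwa [this] at hw
      exact Sp_mono (T := {m | ∀ t, m t ≠ 0 → (t : ℕ) < b}) _
        (fun m hm t ht => Nat.lt_succ_of_lt (hm t ht)) (ih hw')

theorem mul_x_pow_eq_zero (l : Fin N) (n : ℕ) {a : R} (ha : a ∈ I K Q.x 0 l)
    (h : a * Q.x l ^ n = 0) : a = 0 := by
  have ha' := L_span Q l ha
  unfold Sp at ha'
  rw [Finsupp.mem_span_image_iff_linearCombination] at ha'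
  obtain ⟨f, hf, rfl⟩ := ha'
  rw [Finsupp.mem_supported] at hf
  have key : Finsupp.linearCombination K (ordMonomial Q.x) f * Q.x l ^ n =
      Finsupp.linearCombination K (ordMonomial Q.x) (f.mapDomain (fun m => m + Pi.single l n)) := by
    rw [Finsupp.linearCombination_mapDomain, Finsupp.linearCombination_apply,
      Finsupp.linearCombination_apply, Finsupp.sum, Finsupp.sum, Finset.sum_mul]
    apply Finset.sum_congr rfl
    intro m hm
    rw [smul_mul_assoc, ← mono_single Q.x l n, mono_mul Q.x m _ l]
    · rfl
    · intro t ht; exact le_of_lt (hf hm t ht)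
    · intro t ht
      by_cases htl : t = l
      · rw [htl]
      · simp [htl] at ht
  rw [key] at h
  have h1 : f.mapDomain (fun m => m + Pi.single l n) = 0 := Q.pbw (by rw [h, map_zero])
  have h2 : f = 0 := by
    apply Finsupp.mapDomain_injective (f := fun m : Fin N → ℕ => m + Pi.single l n)
    · intro m m' hmm; exact add_right_cancel hmm
    · rw [h1, Finsupp.mapDomain_zero]
  rw [h2, map_zero]

theorem oreD_L (l : Fin N) : OreD (I K Q.x 0 l) (Q.x l) (Q.act (Q.h l)) :=
  { oreC_L Q l with
    indep := by
      intro n a ha h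
      apply mul_x_pow_eq_zero Q l n ha
      have h1 := Fil_le_Sp Q.x l (fun a ha => L_span Q l ha) n h
      have h2 := mul_pow_mem_Sp Q.x l n (L_span Q l ha)
      refine Sp_disj Q.pbw ?_ h1 h2
      intro m hm hm'
      have a1 := hm.1
      have a2 := hm'.1
      omega }

end Q
end QN

namespace QN

section S
variable {K : Type u} [Field K] {R : Type v} [Ring R] [Algebra K R] {N r : ℕ}

theorem I_rev (x : Fin N → R) (i : Fin N) :
    I K (fun t => x t.rev) 0 (i.rev : ℕ) = I K x (i + 1) N := by
  unfold I
  congr 1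
  ext w
  constructor
  · rintro ⟨t, ht, rfl⟩
    refine ⟨t.rev, ?_, rfl⟩
    simp only [Set.mem_ofPred_eq, Fin.val_rev] at *
    omega
  · rintro ⟨t, ht, rfl⟩
    refine ⟨t.rev, ?_, by simp⟩
    simp only [Set.mem_ofPred_eq, Fin.val_rev] at *
    omega

theorem ordMonomial_rev (x : Fin N → R) (m : Fin N → ℕ) :
    ordMonomial (fun t => x t.rev) m = revOrdMonomial x (fun t => m t.rev) := by
  unfold ordMonomial revOrdMonomial
  rw [List.finRange_reverse, List.map_map]
  congr 1
  apply List.map_congr_left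
  intro t _
  simp

/-- The reversed quantum nilpotent algebra. -/
def revQ (S : SymQNA K R N r) : QNA K R N r where
  x := fun t => S.x t.rev
  act := S.act
  h := fun t => S.hstar t.rev
  lam := fun t => S.lamstar t.rev
  rational := S.rational
  gen := by
    rw [← S.gen]
    congr 1
    exact Fin.rev_surjective.range_comp S.x
  pbw := by
    have h : (ordMonomial (fun t => S.x t.rev)) =
        (revOrdMonomial S.x) ∘ (fun m : Fin N → ℕ => fun t => m t.rev) := by
      funext m; exact ordMonomial_rev S.x m
    rw [h]
    apply S.pbwRev.comp
    intro m m' hmm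
    funext t
    have := congrFun hmm t.rev
    simpa using this
  eigenvec := fun k => S.eigenvec k.rev
  stable := by
    intro k a ha
    have h1 : Rsub K (fun t => S.x t.rev) (k : ℕ) = RsubRev K S.x (k.rev : ℕ) := by
      rw [Rsub_eq, RsubRev_eq, ← I_rev, Fin.rev_rev]
    rw [h1] at ha ⊢
    exact S.stableRev k.rev a ha
  locnil := by
    intro k a ha
    have h1 : Rsub K (fun t => S.x t.rev) (k : ℕ) = RsubRev K S.x (k.rev : ℕ) := by
      rw [Rsub_eq, RsubRev_eq, ← I_rev, Fin.rev_rev]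
    rw [h1] at ha
    exact S.locnilRev k.rev a ha
  hx := fun k => S.hxstar k.rev
  lam_not_root := fun k => S.lamstar_not_root k.rev

variable (S : SymQNA K R N r)

theorem oreD_U (i : Fin N) : OreD (I K S.x (i + 1) N) (S.x i) (S.act (S.hstar i)) := by
  have := oreD_L (revQ S) i.rev
  have e : I K (revQ S).x 0 (i.rev : ℕ) = I K S.x (i + 1) N := I_rev S.x i
  rw [e] at this
  simpa [revQ] using this

theorem I_N (x : Fin N → R) (a b : ℕ) : I K x a b ≤ I K x a N := by
  unfold I
  apply Algebra.adjoin_mono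
  apply Set.image_mono
  intro t ht
  simp only [Set.mem_ofPred_eq] at *
  omega

theorem U_span (a : ℕ) {w : R} (hw : w ∈ I K S.x a N) :
    w ∈ Sp K S.x {m | ∀ t, m t ≠ 0 → a ≤ (t : ℕ)} := by
  obtain ⟨n, hn⟩ : ∃ n, N ≤ n + a := ⟨N, by omega⟩
  induction n generalizing a w with
  | zero =>
    obtain ⟨s, rfl⟩ := I_self S.x (by omega) hw
    rw [Algebra.algebraMap_eq_smul_one, ← mono_zero S.x]
    exact Submodule.smul_mem _ _ (mono_mem_Sp _ (by simp))
  | succ n ih =>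
    by_cases ha : a < N
    · obtain ⟨q, hq⟩ := (oreD_U S ⟨a, ha⟩).ext_of_adjoin (I_pred_cases S.x N ⟨a, ha⟩) hw
      refine (oreD_U S ⟨a, ha⟩).Fil_induction_left
        (P := fun w => w ∈ Sp K S.x {m | ∀ t, m t ≠ 0 → a ≤ (t : ℕ)}) (zero_mem _)
        (fun _ _ h h' => add_mem h h') ?_ hq
      intro k b hb
      refine Sp_mul S.x (T1 := {Pi.single ⟨a, ha⟩ k}) ?_ ?_ (ih (a + 1) hb (by omega))
      · rintro m1 rfl m2 h2
        rw [mono_mul S.x _ m2 a]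
        · apply mono_mem_Sp
          intro t ht
          by_cases hta : t = ⟨a, ha⟩
          · rw [hta]
          · have : m2 t ≠ 0 := by simpa [hta] using ht
            have := h2 t this
            omega
        · intro t ht
          by_cases htl : t = ⟨a, ha⟩
          · rw [htl]
          · simp [htl] at ht
        · intro t ht
          have := h2 t ht
          omega
      · rw [← mono_single S.x _ k]; exact mono_mem_Sp S.x rfl
    · obtain ⟨s, rfl⟩ := I_self S.x (by omega) hw
      rw [Algebra.algebraMap_eq_smul_one, ← mono_zero S.x]
      exact Submodule.smul_mem _ _ (mono_mem_Sp _ (by simp))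

theorem I_span {a b : ℕ} {w : R} (hw : w ∈ I K S.x a b) :
    w ∈ Sp K S.x {m | ∀ t, m t ≠ 0 → a ≤ (t : ℕ) ∧ (t : ℕ) < b} := by
  have h1 := L_span S.toQNA b (I_mono S.x (Nat.zero_le a) le_rfl hw)
  have h2 := U_span S a (I_N S.x a b hw)
  exact Sp_mono _ (fun m hm t ht => ⟨hm.1 t ht, hm.2 t ht⟩) (Sp_inter S.pbw h2 h1)

theorem I_inter {a b : ℕ} {w : R} (h1 : w ∈ I K S.x 0 b) (h2 : w ∈ I K S.x a N) :
    w ∈ I K S.x a b := by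
  have h1 := L_span S.toQNA b h1
  have h2 := U_span S a h2
  refine Sp_le_I S.x ?_ (Sp_inter S.pbw h2 h1)
  intro m hm t ht
  exact ⟨hm.1 t ht, hm.2 t ht⟩

theorem oreF {a : ℕ} (l : Fin N) (hal : a ≤ l) :
    OreD (I K S.x a l) (S.x l) (S.act (S.h l)) := by
  apply (oreD_L S.toQNA l).sub (I_mono S.x (Nat.zero_le a) le_rfl)
  refine ⟨fun w hw => act_mem S.toQNA _ hw, fun w hw => ?_, fun w hw => ?_⟩
  · rw [act_symm]; exact act_mem S.toQNA _ hw
  · apply I_inter S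
    · exact (oreD_L S.toQNA l).comm w (I_mono S.x (Nat.zero_le a) le_rfl hw)
    · have hl := x_mem (K := K) S.x (a := a) l hal l.2
      have hw' := I_N S.x a l hw
      exact sub_mem (mul_mem hl hw') (mul_mem (act_mem S.toQNA _ hw') hl)

theorem oreB {b : ℕ} (i : Fin N) (hib : i < b) :
    OreD (I K S.x (i + 1) b) (S.x i) (S.act (S.hstar i)) := by
  apply (oreD_U S i).sub (I_N S.x _ _)
  refine ⟨fun w hw => act_mem S.toQNA _ hw, fun w hw => ?_, fun w hw => ?_⟩
  · rw [act_symm]; exact act_mem S.toQNA _ hw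
  · apply I_inter S
    · have hi := x_mem (K := K) S.x (a := 0) i (Nat.zero_le _) hib
      have hw' := I_mono (K := K) S.x (Nat.zero_le (i + 1)) le_rfl hw
      exact sub_mem (mul_mem hi hw') (mul_mem (act_mem S.toQNA _ hw') hi)
    · exact (oreD_U S i).comm w (I_N S.x _ _ hw)

theorem filF {a : ℕ} (l : Fin N) (hal : a ≤ l) {w : R} (hw : w ∈ I K S.x a (l + 1)) :
    ∃ n, w ∈ Fil (I K S.x a l) (S.x l) n :=
  (oreF S l hal).ext_of_adjoin (I_succ_cases S.x a l) hw

theorem filB {b : ℕ} (i : Fin N) (hib : i < b) {w : R} (hw : w ∈ I K S.x i b) :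
    ∃ n, w ∈ Fil (I K S.x (i + 1) b) (S.x i) n :=
  (oreB S i hib).ext_of_adjoin (I_pred_cases S.x b i) hw

theorem nontriv (S : SymQNA K R N r) : Nontrivial R := by
  refine ⟨⟨ordMonomial S.x 0, 0, S.pbw.ne_zero 0⟩⟩

theorem x_ne (t : Fin N) : S.x t ≠ 0 := by
  have := S.pbw.ne_zero (Pi.single t 1)
  rwa [mono_single, pow_one] at this

theorem I_top : I K S.x 0 N = ⊤ := by
  rw [← S.gen]
  unfold I
  congr 1
  ext w; simp

theorem nzd (S : SymQNA K R N r) : NoZeroDivisors R := by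
  have := nontriv S
  have key : ∀ b, b ≤ N → ∀ v ∈ I K S.x 0 b, ∀ w ∈ I K S.x 0 b, v * w = 0 → v = 0 ∨ w = 0 := by
    intro b
    induction b with
    | zero =>
      intro _ v hv w hw h
      obtain ⟨s, rfl⟩ := I_self S.x le_rfl hv
      obtain ⟨t, rfl⟩ := I_self S.x le_rfl hw
      rw [← map_mul, map_eq_zero] at h
      rcases mul_eq_zero.1 h with h | h <;> simp [h]
    | succ b ih =>
      intro hb v hv w hw h
      obtain ⟨n, hn⟩ := filF S ⟨b, hb⟩ (Nat.zero_le _) hv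
      obtain ⟨m, hm⟩ := filF S ⟨b, hb⟩ (Nat.zero_le _) hw
      exact (oreF S ⟨b, hb⟩ (Nat.zero_le _)).domain (ih (by omega)) hn hm h
  refine ⟨fun {v w} h => key N le_rfl v ?_ w ?_ h⟩ <;> rw [I_top] <;> trivial

/-- eigenvalue of `x t` under `ξ` -/
def ch (ξ : Torus K r) (t : Fin N) : K := (act_x S.toQNA ξ t).choose

theorem ch_ne (ξ : Torus K r) (t : Fin N) : ch S ξ t ≠ 0 := (act_x S.toQNA ξ t).choose_spec.1

theorem ch_eq (ξ : Torus K r) (t : Fin N) : S.act ξ (S.x t) = ch S ξ t • S.x t :=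
  (act_x S.toQNA ξ t).choose_spec.2

theorem smul_inj' (S : SymQNA K R N r) {s t : K} {w : R} (hw : w ≠ 0) (h : s • w = t • w) : s = t := by
  have := nontriv S
  have := nzd S
  have h1 : algebraMap K R (s - t) * w = 0 := by
    rw [← Algebra.smul_def, sub_smul, h, sub_self]
  rcases mul_eq_zero.1 h1 with h2 | h2
  · rw [map_eq_zero] at h2; exact sub_eq_zero.1 h2
  · exact absurd h2 hw

theorem ch_h (l : Fin N) : ch S (S.h l) l = S.lam l :=
  smul_inj' S (x_ne S l) (by rw [← ch_eq, S.hx])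

theorem ch_hstar (l : Fin N) : ch S (S.hstar l) l = S.lamstar l :=
  smul_inj' S (x_ne S l) (by rw [← ch_eq, S.hxstar])

theorem lam_ne (l : Fin N) : S.lam l ≠ 0 := by rw [← ch_h]; exact ch_ne S _ _
theorem lamstar_ne (l : Fin N) : S.lamstar l ≠ 0 := by rw [← ch_hstar]; exact ch_ne S _ _
theorem lam_ne_one (l : Fin N) : S.lam l ≠ 1 := by simpa using S.lam_not_root l 1 one_ne_zero
theorem lamstar_ne_one (l : Fin N) : S.lamstar l ≠ 1 := by
  simpa using S.lamstar_not_root l 1 one_ne_zero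

/-- The commutator defect. -/
def dd (j i : Fin N) : R := S.x j * S.x i - ch S (S.h j) i • (S.x i * S.x j)

theorem x_notMem {i : Fin N} {a b : ℕ} (h : (i : ℕ) < a) : S.x i ∉ I K S.x a b := by
  intro hm
  have := nontriv S
  have hm' : S.x i ∈ I K S.x (i + 1) N := I_N S.x _ b (I_mono S.x h le_rfl hm)
  have := (oreB S i i.2).indep 1 1 (one_mem _) (by rw [mem_Fil_one]; simpa using hm')
  exact one_ne_zero this

theorem x_notMem' {i : Fin N} {a b : ℕ} (h : b ≤ (i : ℕ)) : S.x i ∉ I K S.x a b := by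
  intro hm
  have := nontriv S
  have hm' : S.x i ∈ I K S.x 0 i := I_mono S.x (Nat.zero_le a) h hm
  have := (oreF S i (Nat.zero_le _)).indep 1 1 (one_mem _) (by rw [mem_Fil_one]; simpa using hm')
  exact one_ne_zero this

theorem pair (i j : Fin N) (hij : i < j) :
    ch S (S.hstar i) j * ch S (S.h j) i = 1 ∧ dd S j i ∈ I K S.x (i + 1) j := by
  have hij' : (i : ℕ) < j := hij
  have hxi : S.x i ∈ I K S.x i j := x_mem S.x i le_rfl hij'
  have OF := oreF S (a := i) j hij'.le
  have h1 : dd S j i ∈ I K S.x i j := by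
    have := OF.comm _ hxi
    rwa [ch_eq, smul_mul_assoc] at this
  have hxj : S.x j ∈ I K S.x (i + 1) (j + 1) := x_mem S.x j hij' (Nat.lt_succ_self _)
  have OB := oreB S (b := j + 1) i (by omega)
  have h2 := OB.comm _ hxj
  rw [ch_eq, smul_mul_assoc] at h2
  set p := ch S (S.hstar i) j
  set q := ch S (S.h j) i
  have e : S.x i * S.x j - p • (S.x j * S.x i) =
      ((1 - p * q) • S.x i) * S.x j + (- (p • dd S j i)) := by
    unfold dd
    simp only [smul_sub, sub_smul, one_smul, smul_mul_assoc, sub_mul, mul_smul]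
    abel
  rw [e] at h2
  have m1 : (1 - p * q) • S.x i ∈ I K S.x i j := Subalgebra.smul_mem _ hxi _
  have m2 : - (p • dd S j i) ∈ I K S.x i j := neg_mem (Subalgebra.smul_mem _ h1 _)
  have hle : I K S.x (i + 1) j ≤ I K S.x i j := I_mono S.x (Nat.le_succ _) le_rfl
  obtain ⟨n, hn⟩ := filF S (a := i + 1) j hij' h2
  have h3 := OF.restrict_Fil hle hn (mem_Fil_two.2 ⟨_, m1, _, m2, rfl⟩)
  obtain ⟨a, ha, b, hb, hab⟩ := mem_Fil_two.1 h3
  obtain ⟨e1, e2⟩ := OF.lin_unique m1 m2 (hle ha) (hle hb) hab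
  constructor
  · by_contra hne
    have h0 : 1 - p * q ≠ 0 := fun h => hne (sub_eq_zero.1 h).symm
    rw [← e1] at ha
    have := Subalgebra.smul_mem _ ha (1 - p * q)⁻¹
    rw [smul_smul, inv_mul_cancel₀ h0, one_smul] at this
    exact x_notMem S (Nat.lt_succ_self _) this
  · rw [← e2] at hb
    have := Subalgebra.smul_mem _ (neg_mem hb) p⁻¹
    rwa [neg_neg, smul_smul, inv_mul_cancel₀ (ch_ne S _ _), one_smul] at this

end S
end QN

namespace QN

section Primes
variable {K : Type u} [Field K] {R : Type v} [Ring R] [Algebra K R] {N r : ℕ}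

/-- `p` is the predecessor of `l` in its level set. -/
def IsPred (η : Fin N → ℤ) (p l : Fin N) : Prop :=
  p < l ∧ η p = η l ∧ ∀ t, p < t → t < l → η t ≠ η l

theorem pred_cases (η : Fin N → ℤ) (k : Fin N) :
    (predIdx η k = ⊥ ∧ ∀ t, t < k → η t ≠ η k) ∨ ∃ p : Fin N, predIdx η k = p ∧ IsPred η p k := by
  unfold predIdx
  rcases h : (Finset.univ.filter fun l => l < k ∧ η l = η k).max with _ | p
  · left
    refine ⟨rfl, ?_⟩
    have h' := Finset.max_eq_bot.1 h
    intro t ht he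
    have : t ∈ (Finset.univ.filter fun l => l < k ∧ η l = η k) := by simp [ht, he]
    rw [h'] at this
    simp at this
  · right
    refine ⟨p, rfl, ?_⟩
    have h1 := Finset.mem_of_max h
    simp only [Finset.mem_filter, Finset.mem_univ, true_and] at h1
    refine ⟨h1.1, h1.2, ?_⟩
    intro t h2 h3 h4
    have : t ∈ (Finset.univ.filter fun l => l < k ∧ η l = η k) := by simp [h3, h4]
    have := Finset.le_max_of_eq this h
    exact absurd h2 (not_lt.2 this)

/-- common eigenvector of the torus -/
def Eig (S : SymQNA K R N r) (a : R) : Prop := ∀ ξ, ∃ s : K, S.act ξ a = s • a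

theorem Eig.spec {S : SymQNA K R N r} {a : R} (h : Eig S a) (ha : a ≠ 0) (ξ : Torus K r) :
    ∃ s : K, s ≠ 0 ∧ S.act ξ a = s • a := by
  obtain ⟨s, hs⟩ := h ξ
  refine ⟨s, ?_, hs⟩
  rintro rfl
  rw [zero_smul] at hs
  exact ha ((map_eq_zero_iff _ (S.act ξ).injective).1 hs)

theorem I_ind {x : Fin N → R} {a b : ℕ} {P : R → Prop}
    (hx : ∀ t : Fin N, a ≤ (t : ℕ) → (t : ℕ) < b → P (x t)) (hc : ∀ s : K, P (algebraMap K R s))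
    (hadd : ∀ y z, P y → P z → P (y + z)) (hmul : ∀ y z, P y → P z → P (y * z))
    {w : R} (hw : w ∈ I K x a b) : P w := by
  unfold I at hw
  induction hw using Algebra.adjoin_induction with
  | mem y hy => obtain ⟨t, ht, rfl⟩ := hy; exact hx t ht.1 ht.2
  | algebraMap c => exact hc c
  | add y z _ _ hy hz => exact hadd y z hy hz
  | mul y z _ _ hy hz => exact hmul y z hy hz

theorem iter_smul (σ : R ≃ₐ[K] R) (n : ℕ) (k : K) (v : R) : σ^[n] (k • v) = k • σ^[n] v := by
  induction n with
  | zero => rfl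
  | succ n ih => rw [Function.iterate_succ_apply', Function.iterate_succ_apply', ih, map_smul]

/-- Normality on an interval algebra follows from generators. -/
theorem normal_of_gens (x : Fin N → R) {a b : ℕ} {P : R}
    (h : ∀ t : Fin N, a ≤ (t : ℕ) → (t : ℕ) < b → ∃ z ∈ I K x a b, x t * P = P * z)
    {w : R} (hw : w ∈ I K x a b) : ∃ z ∈ I K x a b, w * P = P * z := by
  refine I_ind (P := fun w => ∃ z ∈ I K x a b, w * P = P * z) h ?_ ?_ ?_ hw
  · intro s; exact ⟨algebraMap K R s, algebraMap_mem _ _, Algebra.commutes s P⟩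
  · rintro y z ⟨y', hy, ey⟩ ⟨z', hz, ez⟩
    exact ⟨y' + z', add_mem hy hz, by rw [add_mul, mul_add, ey, ez]⟩
  · rintro y z ⟨y', hy, ey⟩ ⟨z', hz, ez⟩
    exact ⟨y' * z', mul_mem hy hz, by rw [mul_assoc, ez, ← mul_assoc, ey, mul_assoc]⟩

theorem normal_of_gens' (x : Fin N → R) {a b : ℕ} {P : R}
    (h : ∀ t : Fin N, a ≤ (t : ℕ) → (t : ℕ) < b → ∃ z ∈ I K x a b, P * x t = z * P)
    {w : R} (hw : w ∈ I K x a b) : ∃ z ∈ I K x a b, P * w = z * P := by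
  refine I_ind (P := fun w => ∃ z ∈ I K x a b, P * w = z * P) h ?_ ?_ ?_ hw
  · intro s; exact ⟨algebraMap K R s, algebraMap_mem _ _, (Algebra.commutes s P).symm⟩
  · rintro y z ⟨y', hy, ey⟩ ⟨z', hz, ez⟩
    exact ⟨y' + z', add_mem hy hz, by rw [add_mul, mul_add, ey, ez]⟩
  · rintro y z ⟨y', hy, ey⟩ ⟨z', hz, ez⟩
    exact ⟨y' * z', mul_mem hy hz, by rw [← mul_assoc, ey, mul_assoc, ez, mul_assoc]⟩

variable {S : SymQNA K R N r} {η : Fin N → ℤ} {c y : Fin N → R}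

theorem prime_y (hs : IsPrimeSeq K S.toQNA η c y) (l : Fin N) (e : ℕ) (h1 : (l : ℕ) < e)
    (h2 : e ≤ N) (h3 : ∀ t : Fin N, l < t → (t : ℕ) < e → η t ≠ η l) :
    IsPrimeIn K (I K S.x 0 e) (y l) := by
  have h := (hs.prime_iff ⟨e - 1, by omega⟩ (y l)).2 ⟨l, by
    rw [Fin.le_def]; simp; omega, ?_, 1, by simp⟩
  · have := h.1
    rw [Rsub_eq] at this
    simpa [Nat.sub_add_cancel (show 1 ≤ e by omega)] using this
  · intro l' hl hl'
    rw [Fin.le_def] at hl'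
    simp only at hl'
    exact h3 l' hl (by omega)

theorem y_mem (hs : IsPrimeSeq K S.toQNA η c y) (l : Fin N) : y l ∈ I K S.x 0 (l + 1) :=
  (prime_y hs l (l + 1) (Nat.lt_succ_self _) l.2 (fun t h h' => by
    rw [Fin.lt_def] at h; omega)).1

theorem y_ne (hs : IsPrimeSeq K S.toQNA η c y) (l : Fin N) : y l ≠ 0 :=
  (prime_y hs l (l + 1) (Nat.lt_succ_self _) l.2 (fun t h h' => by
    rw [Fin.lt_def] at h; omega)).2.1

theorem y_eig (hs : IsPrimeSeq K S.toQNA η c y) (l : Fin N) : Eig S (y l) := by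
  obtain ⟨f, hf⟩ := hs.homog l
  exact fun ξ => ⟨_, hf ξ⟩

theorem y_notMem (hs : IsPrimeSeq K S.toQNA η c y) (l : Fin N) : y l ∉ I K S.x 0 l := by
  intro hy
  by_cases hd : deltaZero K S.toQNA l
  · rw [hs.rec_delta_zero l hd] at hy
    exact x_notMem' S le_rfl hy
  · have e := hs.rec_delta_ne l hd
    have hc := hs.c_mem l hd
    rw [Rsub_eq] at hc
    have key : ∀ G ∈ I K S.x 0 l, G ≠ 0 → y l = G * S.x l - c l → False := by
      intro G hG hG0 e
      apply hG0
      refine (oreF S l (Nat.zero_le _)).indep 1 G hG ?_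
      rw [mem_Fil_one, pow_one]
      have := add_mem hy hc
      rw [e] at this
      simpa using this
    have := nontriv S
    rcases pred_cases η l with ⟨h, _⟩ | ⟨p, h, hp⟩
    · rw [h] at e
      exact key 1 (one_mem _) one_ne_zero e
    · rw [h] at e
      exact key (y p) (I_mono S.x le_rfl (by have := hp.1; rw [Fin.lt_def] at this; omega)
        (y_mem hs p)) (y_ne hs p) e

theorem prime_ext {j : Fin N} {P : R} (hd : deltaZero K S.toQNA j) (hE : Eig S P)
    (hP : IsPrimeIn K (I K S.x 0 j) P) : IsPrimeIn K (I K S.x 0 (j + 1)) P := by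
  have := nontriv S
  have := nzd S
  obtain ⟨hm, h0, hu, hl, hr, hp⟩ := hP
  have hle : I K S.x 0 j ≤ I K S.x 0 (j + 1) := I_mono S.x le_rfl (Nat.le_succ _)
  have hxj : S.x j ∈ I K S.x 0 (j + 1) := x_mem S.x j (Nat.zero_le _) (Nat.lt_succ_self _)
  have O := oreF S (a := 0) j (Nat.zero_le _)
  obtain ⟨s, s0, hs⟩ := hE.spec h0 (S.h j)
  have hx : S.x j * P = s • (P * S.x j) := by
    have := hd P (by rwa [Rsub_eq])
    unfold skewDelta at this
    have := sub_eq_zero.1 this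
    rw [this, hs, smul_mul_assoc]
  have nl : ∀ a ∈ I K S.x 0 (j + 1), ∃ b ∈ I K S.x 0 (j + 1), a * P = P * b := by
    intro a ha
    refine normal_of_gens S.x ?_ ha
    intro t _ ht
    rcases Nat.lt_or_ge (t : ℕ) j with h | h
    · obtain ⟨b, hb, e⟩ := hl _ (x_mem S.x t (Nat.zero_le _) h)
      exact ⟨b, hle hb, e⟩
    · have : t = j := Fin.ext (by omega)
      subst this
      exact ⟨s • S.x t, Subalgebra.smul_mem _ hxj _, by rw [hx, mul_smul_comm]⟩
  have nr : ∀ a ∈ I K S.x 0 (j + 1), ∃ b ∈ I K S.x 0 (j + 1), P * a = b * P := by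
    intro a ha
    refine normal_of_gens' S.x ?_ ha
    intro t _ ht
    rcases Nat.lt_or_ge (t : ℕ) j with h | h
    · obtain ⟨b, hb, e⟩ := hr _ (x_mem S.x t (Nat.zero_le _) h)
      exact ⟨b, hle hb, e⟩
    · have : t = j := Fin.ext (by omega)
      subst this
      refine ⟨s⁻¹ • S.x t, Subalgebra.smul_mem _ hxj _, ?_⟩
      rw [smul_mul_assoc, hx, smul_smul, inv_mul_cancel₀ s0, one_smul]
  refine ⟨hle hm, h0, ?_, nl, nr, ?_⟩
  · rintro ⟨u, hu1, hu2, hu3⟩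
    apply hu
    obtain ⟨n, hn⟩ := filF S j (Nat.zero_le _) hu1
    have := O.deg (w := P) (n := 0) (m := 1) hm h0 (by simp) hn (by
      rw [hu2, mem_Fil_one]; exact one_mem _)
    exact ⟨u, mem_Fil_one.1 this, hu2, hu3⟩
  · have hsit : ∀ n : ℕ, (S.act (S.h j))^[n] P = s ^ n • P := by
      intro n
      induction n with
      | zero => simp
      | succ n ih => rw [Function.iterate_succ_apply', ih, map_smul, hs, smul_smul, pow_succ]
    have key : ∀ q n m : ℕ, n + m ≤ q → ∀ a ∈ Fil (I K S.x 0 j) (S.x j) n,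
        ∀ b ∈ Fil (I K S.x 0 j) (S.x j) m, (∃ d ∈ I K S.x 0 (j + 1), a * b = P * d) →
        (∃ d ∈ I K S.x 0 (j + 1), a = P * d) ∨ (∃ d ∈ I K S.x 0 (j + 1), b = P * d) := by
      intro q
      induction q with
      | zero =>
        intro n m hq a ha b hb _
        have : n = 0 := by omega
        subst this
        rw [mem_Fil_zero] at ha
        left; exact ⟨0, zero_mem _, by simp [ha]⟩
      | succ q ih =>
        intro n m hq a ha b hb hd
        obtain ⟨d, hd, e⟩ := hd
        rcases n with _ | n
        · rw [mem_Fil_zero] at ha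
          left; exact ⟨0, zero_mem _, by simp [ha]⟩
        rcases m with _ | m
        · rw [mem_Fil_zero] at hb
          right; exact ⟨0, zero_mem _, by simp [hb]⟩
        obtain ⟨a1, ha1, ha2⟩ := mem_Fil_succ.1 ha
        obtain ⟨b1, hb1, hb2⟩ := mem_Fil_succ.1 hb
        have ha' := Fil_le_I_succ S.x 0 j (Nat.zero_le _) _ ha
        have hb' := Fil_le_I_succ S.x 0 j (Nat.zero_le _) _ hb
        have hxn : ∀ n, S.x j ^ n ∈ I K S.x 0 (j + 1) := fun n => pow_mem hxj n
        obtain ⟨dn, hdn⟩ := filF S j (Nat.zero_le _) hd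
        have hab := O.mul_mem_Fil ha hb
        rw [e, show n + 1 + m = 0 + (n + m + 1) by omega] at hab
        have hd2 := O.deg (w := P) (n := 0) hm h0 (by simp) hdn hab
        obtain ⟨d1, hd1, hd3⟩ := mem_Fil_succ.1 hd2
        have htop := O.mul_top ha1 hb1 ha2 hb2
        have htop' := left_mem_Fil hm hd3
        rw [mul_sub, ← mul_assoc, ← e] at htop'
        have heq := O.top_unique (mul_mem ha1 (O.iter_mem hb1 n)) (mul_mem hm hd1) htop htop'
        rcases hp _ ha1 _ (O.iter_mem hb1 n) ⟨d1, hd1, heq⟩ with ⟨z, hz, ez⟩ | ⟨z, hz, ez⟩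
        · have h1 : a - P * (z * S.x j ^ n) ∈ Fil (I K S.x 0 j) (S.x j) n := by
            rw [← mul_assoc, ← ez]; exact ha2
          have hzm : z * S.x j ^ n ∈ I K S.x 0 (j + 1) := mul_mem (hle hz) (hxn n)
          rcases ih n (m + 1) (by omega) _ h1 b hb
            ⟨d - z * S.x j ^ n * b, sub_mem hd (mul_mem hzm hb'), by
              rw [sub_mul, e, mul_sub]; noncomm_ring⟩ with ⟨v, hv, ev⟩ | h
          · left
            exact ⟨v + z * S.x j ^ n, add_mem hv hzm, by
              rw [mul_add, ← ev]; abel⟩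
          · right; exact h
        · obtain ⟨z', hz', ez'⟩ : ∃ z' ∈ I K S.x 0 j, b1 = P * z' := by
            refine ⟨(s ^ n)⁻¹ • ((S.act (S.h j)).symm^[n] z),
              Subalgebra.smul_mem _ (O.iterinv_mem hz n) _, ?_⟩
            apply (S.act (S.h j)).injective.iterate n
            have h2 : (S.act (S.h j))^[n] ((S.act (S.h j)).symm^[n] z) = z :=
              (Function.LeftInverse.iterate (fun y => (S.act (S.h j)).apply_symm_apply y) n) z
            have h3 : ∀ v w, (S.act (S.h j))^[n] (v * w) =
                (S.act (S.h j))^[n] v * (S.act (S.h j))^[n] w :=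
              fun v w => iterate_map_mul _ n v w
            have h4 := iter_smul (S.act (S.h j)) n
            rw [ez, h3, h4, h2, hsit, smul_mul_smul_comm, mul_inv_cancel₀ (pow_ne_zero _ s0),
              one_smul]
          have h1 : b - P * (z' * S.x j ^ m) ∈ Fil (I K S.x 0 j) (S.x j) m := by
            rw [← mul_assoc, ← ez']; exact hb2
          have hzm : z' * S.x j ^ m ∈ I K S.x 0 (j + 1) := mul_mem (hle hz') (hxn m)
          obtain ⟨a', ha'm, ea'⟩ := nl a ha'
          rcases ih (n + 1) m (by omega) a ha _ h1
            ⟨d - a' * (z' * S.x j ^ m), sub_mem hd (mul_mem ha'm hzm), by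
              rw [mul_sub, e, mul_sub, ← mul_assoc a P, ea', mul_assoc]⟩ with h | ⟨v, hv, ev⟩
          · left; exact h
          · right
            exact ⟨v + z' * S.x j ^ m, add_mem hv hzm, by
              rw [mul_add, ← ev]; abel⟩
    intro a ha b hb
    obtain ⟨n, hn⟩ := filF S j (Nat.zero_le _) ha
    obtain ⟨m, hm⟩ := filF S j (Nat.zero_le _) hb
    exact key (n + m) n m le_rfl a hn b hm

theorem not_deltaZero (hs : IsPrimeSeq K S.toQNA η c y) {k j : Fin N} (hk : IsPred η k j) :
    ¬ deltaZero K S.toQNA j := by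
  intro hd
  obtain ⟨hkj, he, hb⟩ := hk
  have h1 := prime_y hs k j hkj j.2.le (fun t h h' => by rw [he]; exact hb t h h')
  have h2 := prime_ext hd (y_eig hs k) h1
  rw [← Rsub_eq] at h2
  obtain ⟨l, hl, hl', t, ht⟩ := (hs.prime_iff j (y k)).1 ⟨h2, hs.homog k⟩
  rcases lt_trichotomy l k with h | h | h
  · apply y_notMem hs k
    rw [ht]
    exact Subalgebra.smul_mem _ (I_mono S.x le_rfl (by rw [Fin.lt_def] at h; omega) (y_mem hs l)) _
  · subst h
    exact hl' j hkj le_rfl he.symm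
  · apply y_notMem hs l
    have : y l = (t⁻¹ : Kˣ).val • y k := by
      rw [ht, smul_smul]; simp
    rw [this]
    exact Subalgebra.smul_mem _ (I_mono S.x le_rfl (by rw [Fin.lt_def] at h; omega) (y_mem hs k)) _

theorem y_form (hs : IsPrimeSeq K S.toQNA η c y) (l : Fin N) :
    ∃ w ∈ I K S.x 0 l, ∃ G, y l = G * S.x l - w ∧
      ((∃ p, IsPred η p l ∧ G = y p) ∨ ((∀ t, t < l → η t ≠ η l) ∧ G = 1)) := by
  by_cases hd : deltaZero K S.toQNA l
  · refine ⟨0, zero_mem _, 1, by rw [hs.rec_delta_zero l hd]; simp, ?_⟩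
    rcases pred_cases η l with ⟨h, h'⟩ | ⟨p, h, hp⟩
    · right; exact ⟨h', rfl⟩
    · exact absurd hd (not_deltaZero hs hp)
  · have e := hs.rec_delta_ne l hd
    have hc := hs.c_mem l hd
    rw [Rsub_eq] at hc
    rcases pred_cases η l with ⟨h, h'⟩ | ⟨p, h, hp⟩
    · rw [h] at e
      exact ⟨_, hc, 1, e, Or.inr ⟨h', rfl⟩⟩
    · rw [h] at e
      exact ⟨_, hc, y p, e, Or.inl ⟨p, hp, rfl⟩⟩

end Primes
end QN

namespace QN

section Peel
variable {K : Type u} [Field K] {R : Type v} [Ring R] [Algebra K R] {N r : ℕ}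

structure Inv (S : SymQNA K R N r) (η : Fin N → ℤ) (i : ℕ) (Y : Fin N → R) : Prop where
  mem : ∀ l : Fin N, i ≤ l → Y l ∈ I K S.x i (l + 1)
  ne : ∀ l : Fin N, i ≤ l → Y l ≠ 0
  eig : ∀ l : Fin N, i ≤ l → Eig S (Y l)
  form : ∀ l : Fin N, i ≤ l → ∃ u : K, u ≠ 0 ∧ ∃ c ∈ I K S.x i l, ∃ G,
    Y l = u • (G * S.x l) - c ∧
      ((∃ p : Fin N, i ≤ p ∧ IsPred η p l ∧ G = Y p) ∨
        ((∀ t : Fin N, i ≤ t → t < l → η t ≠ η l) ∧ G = 1))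
  normal : ∀ l : Fin N, i ≤ l → ∀ e : ℕ, (l : ℕ) < e → e ≤ N →
    (∀ t : Fin N, l < t → (t : ℕ) < e → η t ≠ η l) →
    ∀ a ∈ I K S.x i e, ∃ b ∈ I K S.x i e, a * Y l = Y l * b

variable {S : SymQNA K R N r} {η : Fin N → ℤ}

theorem inv_zero {c y : Fin N → R} (hs : IsPrimeSeq K S.toQNA η c y) : Inv S η 0 y where
  mem l _ := y_mem hs l
  ne l _ := y_ne hs l
  eig l _ := y_eig hs l
  form l _ := by
    obtain ⟨w, hw, G, e, h⟩ := y_form hs l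
    refine ⟨1, one_ne_zero, w, hw, G, by rw [e, one_smul], ?_⟩
    rcases h with ⟨p, hp, hG⟩ | ⟨h, hG⟩
    · left; exact ⟨p, Nat.zero_le _, hp, hG⟩
    · right; exact ⟨fun t _ => h t, hG⟩
  normal l _ e h1 h2 h3 := (prime_y hs l e h1 h2 h3).2.2.2.1

theorem alg_mem (A : Subalgebra K R) (s : K) : algebraMap K R s ∈ A := algebraMap_mem _ _

theorem smul_ne (S : SymQNA K R N r) {s : K} {w : R} (hs : s ≠ 0) (hw : w ≠ 0) : s • w ≠ 0 := by
  intro h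
  apply hs
  exact smul_inj' S hw (by rw [h, zero_smul])

theorem smul_cancel {s : K} {v w : R} (hs : s ≠ 0) (h : s • v = s • w) : v = w := by
  have := congrArg (fun z => s⁻¹ • z) h
  simpa [smul_smul, inv_mul_cancel₀ hs] using this

theorem act_inj (S : SymQNA K R N r) (ξ : Torus K r) {v w : R} (h : S.act ξ v = S.act ξ w) : v = w :=
  (S.act ξ).injective h

theorem C1 {i : Fin N} {Y : Fin N → R} (h : Inv S η i Y) : ∃ u : K, u ≠ 0 ∧ Y i = u • S.x i := by
  have := nontriv S
  obtain ⟨u, hu, c, hc, G, e, hG⟩ := h.form i le_rfl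
  rcases hG with ⟨p, hp, hp2, _⟩ | ⟨_, rfl⟩
  · have := hp2.1
    rw [Fin.lt_def] at this
    omega
  obtain ⟨s, rfl⟩ := I_self S.x le_rfl hc
  rw [one_mul] at e
  obtain ⟨k, hk⟩ := h.eig i le_rfl (S.h i)
  rw [e, map_sub, map_smul, S.hx, AlgEquiv.commutes] at hk
  have O := oreF S (a := i) i le_rfl
  have e2 : algebraMap K R (u * S.lam i) * S.x i + algebraMap K R (-s) =
      algebraMap K R (k * u) * S.x i + algebraMap K R (-(k * s)) := by
    rw [← Algebra.smul_def, ← Algebra.smul_def, map_neg, map_neg, ← sub_eq_add_neg, ← sub_eq_add_neg,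
      ← smul_smul, hk, smul_sub, smul_smul, map_mul, Algebra.smul_def k (algebraMap K R s)]
  obtain ⟨h1, h2⟩ := O.lin_unique (alg_mem _ _) (alg_mem _ _) (alg_mem _ _) (alg_mem _ _) e2
  have h1 := (algebraMap K R).injective h1
  have h2 := (algebraMap K R).injective h2
  have hk' : k = S.lam i := by
    apply mul_left_cancel₀ hu; rw [h1, mul_comm]
  have hs : s = 0 := by
    by_contra hs
    apply lam_ne_one S i
    rw [← hk']
    have : s = k * s := neg_injective h2
    apply mul_right_cancel₀ hs
    rw [one_mul]; exact this.symm
  exact ⟨u, hu, by rw [e, hs]; simp⟩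

theorem act_Fil (S : SymQNA K R N r) (ξ : Torus K r) {a b : ℕ} {i : Fin N} {n : ℕ} {w : R}
    (hw : w ∈ Fil (I K S.x a b) (S.x i) n) : S.act ξ w ∈ Fil (I K S.x a b) (S.x i) n := by
  induction n generalizing w with
  | zero => rw [mem_Fil_zero] at *; rw [hw, map_zero]
  | succ n ih =>
    obtain ⟨f, hf, h⟩ := mem_Fil_succ.1 hw
    have := ih h
    rw [map_sub, map_mul, map_pow, ch_eq, smul_pow, mul_smul_comm, ← smul_mul_assoc] at this
    exact mem_Fil_succ.2 ⟨_, Subalgebra.smul_mem _ (act_mem S.toQNA ξ hf) _, this⟩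

theorem act_top (S : SymQNA K R N r) (ξ : Torus K r) {a b : ℕ} {i : Fin N} {n : ℕ} {w f : R}
    (hw : w - f * S.x i ^ n ∈ Fil (I K S.x a b) (S.x i) n) :
    S.act ξ w - (ch S ξ i ^ n • S.act ξ f) * S.x i ^ n ∈ Fil (I K S.x a b) (S.x i) n := by
  have := act_Fil S ξ hw
  rwa [map_sub, map_mul, map_pow, ch_eq, smul_pow, mul_smul_comm, ← smul_mul_assoc] at this

theorem exists_top {A : Subalgebra K R} {x w : R} {D m : ℕ} (hm : w ∈ Fil A x m) (hD : w ∉ Fil A x D) :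
    ∃ n, D ≤ n ∧ ∃ f ∈ A, f ≠ 0 ∧ w - f * x ^ n ∈ Fil A x n := by
  induction m with
  | zero => exact absurd (Fil_mono (Nat.zero_le D) hm) hD
  | succ m ih =>
    obtain ⟨f, hf, h⟩ := mem_Fil_succ.1 hm
    by_cases hf0 : f = 0
    · exact ih (by simpa [hf0] using h)
    · refine ⟨m, ?_, f, hf, hf0, h⟩
      by_contra hlt
      exact hD (Fil_mono (by omega) hm)

theorem iter_x (S : SymQNA K R N r) (ξ : Torus K r) (t : Fin N) (n : ℕ) :
    (S.act ξ)^[n] (S.x t) = ch S ξ t ^ n • S.x t := by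
  induction n with
  | zero => simp
  | succ n ih => rw [Function.iterate_succ_apply', ih, map_smul, ch_eq, smul_smul, pow_succ]

theorem iter_add (σ : R ≃ₐ[K] R) (n : ℕ) (v w : R) : σ^[n] (v + w) = σ^[n] v + σ^[n] w :=
  iterate_map_add σ n v w

/-- form of the multiplier when `x_l` normalizes `Y`. -/
theorem mult_form (S : SymQNA K R N r) {a : ℕ} {l : Fin N} (hal : a ≤ l) {Y G c b : R} {u s : K} (hu : u ≠ 0)
    (hY : Y = u • (G * S.x l) - c) (hG : G ∈ I K S.x a l) (hG0 : G ≠ 0) (hc : c ∈ I K S.x a l)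
    (hs : S.act (S.h l) G = s • G) (hb : b ∈ I K S.x a (l + 1)) (hb2 : S.x l * Y = Y * b) :
    ∃ b0 ∈ I K S.x a l, b = s • S.x l + b0 := by
  have := nontriv S
  have := nzd S
  have O := oreF S (a := a) l hal
  have huG : u • G ∈ I K S.x a l := Subalgebra.smul_mem _ hG _
  have t1 : Y - (u • G) * S.x l ^ 1 ∈ Fil (I K S.x a l) (S.x l) 1 := by
    rw [hY, mem_Fil_one, pow_one, smul_mul_assoc]
    simpa using hc
  have t2 : S.x l - 1 * S.x l ^ 1 ∈ Fil (I K S.x a l) (S.x l) 1 := by simp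
  have t3 := O.mul_top (one_mem _) huG t2 t1
  obtain ⟨n, hn⟩ := filF S l hal hb
  have t4 : Y * b ∈ Fil (I K S.x a l) (S.x l) (1 + 2) := by
    rw [← hb2]
    exact mem_Fil_succ.2 ⟨_, mul_mem (one_mem _) (O.iter_mem huG 1), t3⟩
  have t5 := O.deg huG (smul_ne S hu hG0) t1 hn t4
  obtain ⟨b1, hb1, b0, hb0, e⟩ := mem_Fil_two.1 t5
  have t6 : b - b1 * S.x l ^ 1 ∈ Fil (I K S.x a l) (S.x l) 1 := by
    rw [e, mem_Fil_one]; simpa using hb0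
  have t7 := O.mul_top huG hb1 t1 t6
  rw [← hb2] at t7
  have t8 := O.top_unique (mul_mem (one_mem _) (O.iter_mem huG 1))
    (mul_mem huG (O.iter_mem hb1 1)) t3 t7
  simp only [Function.iterate_one, one_mul, map_smul, hs, smul_mul_assoc] at t8
  have t9 := smul_cancel hu t8
  have t10 : G * (S.act (S.h l) b1 - algebraMap K R s) = 0 := by
    rw [mul_sub, ← t9, ← Algebra.commutes, ← Algebra.smul_def, sub_self]
  rcases mul_eq_zero.1 t10 with h | h
  · exact absurd h hG0
  · have : b1 = algebraMap K R s := by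
      apply act_inj S (S.h l)
      rw [AlgEquiv.commutes]; exact sub_eq_zero.1 h
    exact ⟨b0, hb0, by rw [e, this, Algebra.smul_def]⟩

theorem lemma1 (S : SymQNA K R N r) {i l : Fin N} (hil : i < l) {Y G c b : R} {u : K} (hu : u ≠ 0)
    (hY : Y = u • (G * S.x l) - c) (hG : G ∈ I K S.x i l) (hG0 : G ≠ 0) (hGe : Eig S G)
    (hc : c ∈ I K S.x i l) (hYe : Eig S Y)
    (hb : b ∈ I K S.x i (l + 1)) (hb2 : S.x l * Y = Y * b) {D : ℕ}
    (hD : G ∈ Fil (I K S.x (i + 1) (l + 1)) (S.x i) (D + 1)) :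
    Y ∈ Fil (I K S.x (i + 1) (l + 1)) (S.x i) (D + 1) := by
  have := nontriv S
  have := nzd S
  have hil' : (i : ℕ) < l := hil
  by_contra hcon
  have hxl : S.x l ∈ I K S.x (i + 1) (l + 1) := x_mem S.x l hil' (Nat.lt_succ_self _)
  have hYm : Y ∈ I K S.x i (l + 1) := by
    rw [hY]
    have hle : I K S.x i l ≤ I K S.x i (l + 1) := I_mono S.x le_rfl (Nat.le_succ _)
    exact sub_mem (Subalgebra.smul_mem _ (mul_mem (hle hG) (I_mono S.x (Nat.le_succ _) le_rfl hxl)) _)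
      (hle hc)
  have OB := oreB S (b := l + 1) i (by omega)
  have OB0 := oreB S (b := l) i (by omega)
  have OF := oreF S (a := i) l hil'.le
  have OF0 := oreF S (a := i + 1) l hil'
  have hA : I K S.x (i + 1) l ≤ I K S.x (i + 1) (l + 1) := I_mono S.x le_rfl (Nat.le_succ _)
  obtain ⟨m, hm⟩ := filB S i (by omega) hYm
  obtain ⟨n, hDn, f, hf, hf0, htop⟩ := exists_top hm hcon
  -- f lies in the smaller algebra
  have hGx : u • (G * S.x l) ∈ Fil (I K S.x (i + 1) (l + 1)) (S.x i) n := by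
    apply Submodule.smul_mem
    exact Fil_mono hDn (OB.mul_mem_Fil (m := 0) hD (mem_Fil_one.2 hxl))
  have hctop : -c - f * S.x i ^ n ∈ Fil (I K S.x (i + 1) (l + 1)) (S.x i) n := by
    have := sub_mem htop hGx
    convert this using 1
    rw [hY]; abel
  have hf' : f ∈ I K S.x (i + 1) l := by
    obtain ⟨q, hq⟩ := filB S i hil' (neg_mem hc)
    have h1 := OB.restrict_Fil hA hq (mem_Fil_succ.2 ⟨f, hf, hctop⟩)
    obtain ⟨f0, hf0, h2⟩ := mem_Fil_succ.1 h1
    have := OB.top_unique hf (hA hf0) hctop (Fil_le_of_le hA _ _ h2)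
    rwa [this]
  obtain ⟨s, hs0, hs⟩ := hGe.spec hG0 (S.h l)
  obtain ⟨b0, hb0, eb⟩ := mult_form S hil'.le hu hY hG hG0 hc hs hb hb2
  have hb0' : b0 ∈ I K S.x (i + 1) l := by
    obtain ⟨q, hq⟩ := filB S i (by omega) hb
    have h1 : Y * b ∈ Fil (I K S.x (i + 1) (l + 1)) (S.x i) (n + 1) := by
      rw [← hb2]
      exact left_mem_Fil hxl (mem_Fil_succ.2 ⟨f, hf, htop⟩)
    have h2 := mem_Fil_one.1 (OB.deg hf hf0 htop hq h1)
    have h3 : b0 ∈ I K S.x (i + 1) (l + 1) := by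
      have := sub_mem h2 (Subalgebra.smul_mem _ hxl s)
      rw [eb] at this
      simpa using this
    exact I_inter S (I_mono S.x (Nat.zero_le _) le_rfl hb0) (I_N S.x _ _ h3)
  set p := ch S (S.hstar i) l with hp
  set q := ch S (S.h l) i with hq
  have hpq : p * q = 1 := (pair S i l hil).1
  have hbA : b ∈ I K S.x (i + 1) (l + 1) := by
    rw [eb]; exact add_mem (Subalgebra.smul_mem _ hxl s) (hA hb0')
  -- first relation
  have rel1 : S.act (S.h l) f = (s * p ^ n) • f := by
    have h1 : S.x l * Y - (S.x l * f) * S.x i ^ n ∈ Fil (I K S.x (i + 1) (l + 1)) (S.x i) n := by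
      have := left_mem_Fil hxl htop
      rwa [mul_sub, ← mul_assoc] at this
    have h2 := OB.mul_top (m := 0) hf hbA htop (z := b) (by simp)
    rw [add_zero, ← hb2] at h2
    have h3 := OB.top_unique (mul_mem hxl hf) (mul_mem hf (OB.iter_mem hbA n)) h1 h2
    rw [eb, iter_add, iter_smul, iter_x, smul_smul, ← hp] at h3
    have h4 : S.act (S.h l) f * S.x l + (S.x l * f - S.act (S.h l) f * S.x l) =
        ((s * p ^ n) • f) * S.x l + f * (S.act (S.hstar i))^[n] b0 := by
      rw [add_sub_cancel, h3, mul_add, mul_smul_comm, smul_mul_assoc]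
    exact (OF0.lin_unique (OF0.map _ hf') (OF0.comm _ hf') (Subalgebra.smul_mem _ hf' _)
      (mul_mem hf' (OB0.iter_mem hb0' n)) h4).1
  obtain ⟨k, hk⟩ := hYe (S.h l)
  have rel2 : k = s * S.lam l := by
    have h1 : (( u * s * S.lam l) • G) * S.x l + (- S.act (S.h l) c) =
        ((k * u) • G) * S.x l + (-(k • c)) := by
      have h2 := hk
      rw [hY, map_sub, map_smul, map_mul, hs, S.hx, smul_mul_smul_comm, smul_smul, smul_sub,
        smul_smul] at h2
      rw [smul_mul_assoc, smul_mul_assoc, ← sub_eq_add_neg, ← sub_eq_add_neg, ← h2, mul_assoc]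
    have h2 := (OF.lin_unique (Subalgebra.smul_mem _ hG _) (neg_mem (OF.map _ hc))
      (Subalgebra.smul_mem _ hG _) (neg_mem (Subalgebra.smul_mem _ hc _)) h1).1
    have h3 := smul_inj' S hG0 h2
    apply mul_left_cancel₀ hu
    rw [mul_comm u k, ← h3, mul_assoc]
  have rel3 : q ^ n • S.act (S.h l) f = k • f := by
    have h1 := act_top S (S.h l) htop
    rw [hk] at h1
    have h2 := Submodule.smul_mem _ k htop
    rw [smul_sub, ← smul_mul_assoc] at h2
    exact OB.top_unique (Subalgebra.smul_mem _ (act_mem S.toQNA _ hf) _) (Subalgebra.smul_mem _ hf _) h1 h2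
  rw [rel1, rel2, smul_smul] at rel3
  have h := smul_inj' S hf0 rel3
  apply lam_ne_one S l
  apply mul_left_cancel₀ hs0
  rw [← h, mul_one, mul_left_comm, ← mul_pow, mul_comm q p, hpq, one_pow, mul_one]

theorem calc_lem (S : SymQNA K R N r) {i l : Fin N} (hil : i < l) {Y G c f e fp ep : R} {u : K}
    (hf : f ∈ I K S.x (i + 1) (l + 1)) (he : e ∈ I K S.x (i + 1) (l + 1)) (hY : Y = f * S.x i + e)
    (hfp : fp ∈ I K S.x (i + 1) l) (hep : ep ∈ I K S.x (i + 1) l) (hG : G = fp * S.x i + ep)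
    (hY' : Y = u • (G * S.x l) - c) (hc : c ∈ I K S.x i l) :
    ∃ c1 ∈ I K S.x (i + 1) l, ∃ c0 ∈ I K S.x (i + 1) l, c = c1 * S.x i + c0 ∧
      f = (u * ch S (S.hstar i) l) • (fp * S.x l) - c1 := by
  have hil' : (i : ℕ) < l := hil
  have OB := oreB S (b := l + 1) i (by omega)
  have hxl : S.x l ∈ I K S.x (i + 1) (l + 1) := x_mem S.x l hil' (Nat.lt_succ_self _)
  have hA : I K S.x (i + 1) l ≤ I K S.x (i + 1) (l + 1) := I_mono S.x le_rfl (Nat.le_succ _)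
  have hcomm := OB.comm _ hxl
  rw [ch_eq] at hcomm
  set p := ch S (S.hstar i) l
  have e1 : u • (G * S.x l) = ((u * p) • (fp * S.x l)) * S.x i +
      u • (fp * (S.x i * S.x l - (p • S.x l) * S.x i) + ep * S.x l) := by
    rw [hG]
    simp only [mul_sub, smul_mul_assoc, mul_smul_comm, smul_add, smul_sub, add_mul, ← mul_assoc,
      mul_smul, sub_add_eq_add_sub]
    abel
  have m1 : (u * p) • (fp * S.x l) ∈ I K S.x (i + 1) (l + 1) :=
    Subalgebra.smul_mem _ (mul_mem (hA hfp) hxl) _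
  have m2 : u • (fp * (S.x i * S.x l - (p • S.x l) * S.x i) + ep * S.x l) ∈ I K S.x (i + 1) (l + 1) :=
    Subalgebra.smul_mem _ (add_mem (mul_mem (hA hfp) hcomm) (mul_mem (hA hep) hxl)) _
  have hc2 : c ∈ Fil (I K S.x (i + 1) (l + 1)) (S.x i) 2 := by
    have h1 : c = u • (G * S.x l) - Y := by rw [hY']; abel
    rw [h1, e1, hY]
    exact sub_mem (mem_Fil_two.2 ⟨_, m1, _, m2, rfl⟩) (mem_Fil_two.2 ⟨_, hf, _, he, rfl⟩)
  obtain ⟨q, hq⟩ := filB S i hil' hc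
  obtain ⟨c1, hc1, c0, hc0, ec⟩ := mem_Fil_two.1 (OB.restrict_Fil hA hq hc2)
  refine ⟨c1, hc1, c0, hc0, ec, ?_⟩
  refine (OB.lin_unique hf he (sub_mem m1 (hA hc1)) (sub_mem m2 (hA hc0)) ?_).1
  rw [← hY, hY', e1, ec, sub_mul]
  abel

theorem C2 {i : Fin N} {Y : Fin N → R} (h : Inv S η i Y) (n : ℕ) : ∀ l : Fin N, (l : ℕ) = n → i ≤ l →
    (η l = η i → ∃ f ∈ I K S.x (i + 1) (l + 1), ∃ e ∈ I K S.x (i + 1) (l + 1),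
      f ≠ 0 ∧ Y l = f * S.x i + e) ∧ (η l ≠ η i → Y l ∈ I K S.x (i + 1) (l + 1)) := by
  have := nontriv S
  have := nzd S
  induction n using Nat.strong_induction_on with
  | _ n ih =>
  intro l hln hil
  rcases eq_or_lt_of_le hil with rfl | hil
  · refine ⟨fun _ => ?_, fun h => absurd rfl h⟩
    obtain ⟨u, hu, e⟩ := C1 h
    exact ⟨algebraMap K R u, alg_mem _ _, 0, zero_mem _, by simpa using hu, by
      rw [e, Algebra.smul_def, add_zero]⟩
  have hil' : (i : ℕ) < l := hil
  obtain ⟨u, hu, c, hc, G, e, hG⟩ := h.form l hil'.le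
  obtain ⟨b, hb, hb2⟩ := h.normal l hil'.le (l + 1) (Nat.lt_succ_self _) l.2
    (fun t h h' => by rw [Fin.lt_def] at h; omega) (S.x l)
    (x_mem S.x l hil'.le (Nat.lt_succ_self _))
  have hYe := h.eig l hil'.le
  rcases hG with ⟨p, hip, hp, rfl⟩ | ⟨hno, rfl⟩
  · have hpl : (p : ℕ) < l := hp.1
    have hGm : Y p ∈ I K S.x i l := I_mono S.x le_rfl hpl (h.mem p hip)
    have IH := ih p (by omega) p rfl hip
    constructor
    · intro hη
      obtain ⟨fp, hfp, ep, hep, hfp0, eG⟩ := IH.1 (by rw [hp.2.1, hη])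
      have hle : I K S.x (i + 1) (p + 1) ≤ I K S.x (i + 1) l := I_mono S.x le_rfl hpl
      have hle' : I K S.x (i + 1) (p + 1) ≤ I K S.x (i + 1) (l + 1) := I_mono S.x le_rfl (by omega)
      have := lemma1 S hil hu e hGm (h.ne p hip) (h.eig p hip) hc hYe hb hb2 (D := 1)
        (mem_Fil_two.2 ⟨fp, hle' hfp, ep, hle' hep, eG⟩)
      obtain ⟨f, hf, e', he', eY⟩ := mem_Fil_two.1 this
      refine ⟨f, hf, e', he', ?_, eY⟩
      rintro rfl
      obtain ⟨c1, hc1, c0, hc0, ec, ef⟩ := calc_lem S hil hf he' eY (hle hfp) (hle hep) eG e hc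
      have h1 := ((oreF S (a := i + 1) l hil').lin_zero
        (a := (u * ch S (S.hstar i) l) • fp) (b := -c1)
        (Subalgebra.smul_mem _ (hle hfp) _) (neg_mem hc1) (by
          rw [smul_mul_assoc, ← sub_eq_add_neg, ← ef])).1
      exact smul_ne S (mul_ne_zero hu (ch_ne S _ _)) hfp0 h1
    · intro hη
      have h1 := IH.2 (by rwa [hp.2.1])
      exact mem_Fil_one.1 (lemma1 S hil hu e hGm (h.ne p hip) (h.eig p hip) hc hYe hb hb2 (D := 0)
        (mem_Fil_one.2 (I_mono S.x le_rfl (by omega) h1)))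
  · constructor
    · intro hη
      exact absurd hη.symm (hno i le_rfl hil)
    · intro hη
      exact mem_Fil_one.1 (lemma1 S hil hu e (one_mem _) one_ne_zero
        (fun ξ => ⟨1, by simp⟩) hc hYe hb hb2 (D := 0)
        (mem_Fil_one.2 (one_mem _)))

/-- One peeling step. -/
def Step (S : SymQNA K R N r) (η : Fin N → ℤ) (i : Fin N) (Y Y' : Fin N → R) : Prop :=
  ∀ l, i < l → (η l = η i → Y' l ∈ I K S.x (i + 1) (l + 1) ∧ Y' l ≠ 0 ∧
    ∃ e ∈ I K S.x (i + 1) (l + 1), Y l = Y' l * S.x i + e) ∧ (η l ≠ η i → Y' l = Y l)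

theorem step_exists {i : Fin N} {Y : Fin N → R} (h : Inv S η i Y) : ∃ Y', Step S η i Y Y' := by
  have : ∀ l, ∃ z : R, i < l → (η l = η i → z ∈ I K S.x (i + 1) (l + 1) ∧ z ≠ 0 ∧
    ∃ e ∈ I K S.x (i + 1) (l + 1), Y l = z * S.x i + e) ∧ (η l ≠ η i → z = Y l) := by
    intro l
    by_cases hl : i < l
    · by_cases hη : η l = η i
      · obtain ⟨f, hf, e, he, hf0, eY⟩ := (C2 h l l rfl hl.le).1 hη
        exact ⟨f, fun _ => ⟨fun _ => ⟨hf, hf0, e, he, eY⟩, fun h => absurd hη h⟩⟩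
      · exact ⟨Y l, fun _ => ⟨fun h => absurd h hη, fun _ => rfl⟩⟩
    · exact ⟨0, fun h => absurd h hl⟩
  choose Y' hY' using this
  exact ⟨Y', hY'⟩

/-- transferring normality one step down. -/
theorem normal_step (S : SymQNA K R N r) {i : Fin N} {e : ℕ} (hie : (i : ℕ) < e) {Y f g a b : R}
    (hf : f ∈ I K S.x (i + 1) e) (hf0 : f ≠ 0) (hg : g ∈ I K S.x (i + 1) e)
    (hY : Y = f * S.x i + g) (ha : a ∈ I K S.x (i + 1) e) (hb : b ∈ I K S.x i e)
    (hab : a * Y = Y * b) :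
    b ∈ I K S.x (i + 1) e ∧ a * f = f * S.act (S.hstar i) b := by
  have := nontriv S
  have := nzd S
  have O := oreB S i hie
  have htop : Y - f * S.x i ^ 1 ∈ Fil (I K S.x (i + 1) e) (S.x i) 1 := by
    rw [hY, mem_Fil_one]; simpa using hg
  have h1 : a * Y - (a * f) * S.x i ^ 1 ∈ Fil (I K S.x (i + 1) e) (S.x i) 1 := by
    have := left_mem_Fil ha htop
    rwa [mul_sub, ← mul_assoc] at this
  obtain ⟨q, hq⟩ := filB S i hie hb
  have hb' := mem_Fil_one.1 (O.deg hf hf0 htop hq (m := 1) (by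
    rw [← hab]; exact mem_Fil_succ.2 ⟨_, mul_mem ha hf, h1⟩))
  refine ⟨hb', ?_⟩
  have h2 := O.mul_top (m := 0) hf hb' htop (z := b) (by simp)
  rw [← hab] at h2
  exact O.top_unique (mul_mem ha hf) (mul_mem hf (O.iter_mem hb' 1)) h1 h2

theorem normal_step' (S : SymQNA K R N r) {i : Fin N} {e : ℕ} (hie : (i : ℕ) < e) {f a b : R}
    (hf : f ∈ I K S.x (i + 1) e) (hf0 : f ≠ 0) (ha : a ∈ I K S.x (i + 1) e) (hb : b ∈ I K S.x i e)
    (hab : a * f = f * b) : b ∈ I K S.x (i + 1) e := by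
  have := nontriv S
  have := nzd S
  have O := oreB S i hie
  obtain ⟨q, hq⟩ := filB S i hie hb
  exact mem_Fil_one.1 (O.deg (w := f) (n := 0) hf hf0 (by simp) hq (m := 1) (by
    rw [← hab]; exact mem_Fil_one.2 (mul_mem ha hf)))

theorem eig_step (S : SymQNA K R N r) {i : Fin N} {e : ℕ} (hie : (i : ℕ) < e) {Y f g : R}
    (hf : f ∈ I K S.x (i + 1) e) (hg : g ∈ I K S.x (i + 1) e)
    (hY : Y = f * S.x i + g) (hE : Eig S Y) : Eig S f := by
  intro ξ
  obtain ⟨k, hk⟩ := hE ξ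
  have O := oreB S i hie
  have h1 : (ch S ξ i • S.act ξ f) * S.x i + S.act ξ g = (k • f) * S.x i + k • g := by
    rw [hY, map_add, map_mul, ch_eq, mul_smul_comm, smul_add] at hk
    rw [smul_mul_assoc, hk, smul_mul_assoc]
  have h2 := (O.lin_unique (Subalgebra.smul_mem _ (act_mem S.toQNA _ hf) _) (act_mem S.toQNA _ hg)
    (Subalgebra.smul_mem _ hf _) (Subalgebra.smul_mem _ hg _) h1).1
  refine ⟨(ch S ξ i)⁻¹ * k, ?_⟩
  rw [mul_smul, ← h2, smul_smul, inv_mul_cancel₀ (ch_ne S _ _), one_smul]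

theorem step_inv {i : Fin N} {Y Y' : Fin N → R} (h : Inv S η i Y) (hst : Step S η i Y Y') :
    Inv S η (i + 1) Y' := by
  have := nontriv S
  have := nzd S
  have hmem : ∀ l : Fin N, (i : ℕ) + 1 ≤ l → Y' l ∈ I K S.x (i + 1) (l + 1) := by
    intro l hl
    by_cases hη : η l = η i
    · exact ((hst l hl).1 hη).1
    · rw [(hst l hl).2 hη]
      exact (C2 h l l rfl (Nat.le_of_succ_le hl)).2 hη
  refine ⟨hmem, ?_, ?_, ?_, ?_⟩
  · intro l hl
    by_cases hη : η l = η i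
    · exact ((hst l hl).1 hη).2.1
    · rw [(hst l hl).2 hη]; exact h.ne l (by omega)
  · intro l hl
    by_cases hη : η l = η i
    · obtain ⟨hf, hf0, g, hg, e⟩ := (hst l hl).1 hη
      exact eig_step S (by omega) hf hg e (h.eig l (by omega))
    · rw [(hst l hl).2 hη]; exact h.eig l (by omega)
  · intro l hl
    obtain ⟨u, hu, c, hc, G, e, hG⟩ := h.form l (by omega)
    by_cases hη : η l = η i
    · obtain ⟨hf, hf0, g, hg, eY⟩ := (hst l hl).1 hη
      rcases hG with ⟨p, hip, hp, rfl⟩ | ⟨hno, rfl⟩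
      · have hpl : (p : ℕ) < l := hp.1
        have hηp : η p = η i := by rw [hp.2.1, hη]
        rcases Nat.eq_or_lt_of_le hip with hip | hip
        · have : p = i := Fin.ext hip.symm
          subst this
          obtain ⟨v, hv, ev⟩ := C1 h
          obtain ⟨c1, hc1, c0, hc0, ec, ef⟩ := calc_lem S hl hf hg eY
            (fp := algebraMap K R v) (ep := 0) (alg_mem _ _) (zero_mem _)
            (by rw [ev, Algebra.smul_def, add_zero]) e hc
          refine ⟨u * ch S (S.hstar p) l * v, mul_ne_zero (mul_ne_zero hu (ch_ne S _ _)) hv, c1, hc1,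
            1, ?_, Or.inr ⟨fun t h1 h2 => hp.2.2 t h1 h2, rfl⟩⟩
          rw [ef, ← Algebra.smul_def, smul_smul, one_mul]
        · obtain ⟨hfp, hfp0, gp, hgp, ep⟩ := (hst p hip).1 hηp
          have hle : I K S.x (i + 1) (p + 1) ≤ I K S.x (i + 1) l := I_mono S.x le_rfl hpl
          obtain ⟨c1, hc1, c0, hc0, ec, ef⟩ := calc_lem S hl hf hg eY
            (hle hfp) (hle hgp) ep e hc
          exact ⟨u * ch S (S.hstar i) l, mul_ne_zero hu (ch_ne S _ _), c1, hc1,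
            Y' p, ef, Or.inl ⟨p, hip, hp, rfl⟩⟩
      · exact absurd hη.symm (hno i le_rfl hl)
    · have key : G ∈ I K S.x (i + 1) l → c ∈ I K S.x (i + 1) l := by
        intro hGm
        apply I_inter S (I_mono S.x (Nat.zero_le _) le_rfl hc)
        have h1 : c = u • (G * S.x l) - Y l := by rw [e]; abel
        rw [h1]
        refine sub_mem (Subalgebra.smul_mem _ (mul_mem (I_N S.x _ _ hGm)
          (x_mem S.x l hl l.2)) _) ?_
        have := hmem l hl
        rw [(hst l hl).2 hη] at this
        exact I_N S.x _ _ this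
      rw [(hst l hl).2 hη]
      rcases hG with ⟨p, hip, hp, rfl⟩ | ⟨hno, rfl⟩
      · have hpl : (p : ℕ) < l := hp.1
        have hηp : η p ≠ η i := by rwa [hp.2.1]
        have hip' : (i : ℕ) + 1 ≤ p := by
          rcases Nat.eq_or_lt_of_le hip with hip | hip
          · exact absurd (by rw [show p = i from Fin.ext hip.symm]) hηp
          · exact hip
        have hYp := (hst p hip').2 hηp
        refine ⟨u, hu, c, key ?_, Y p, e, Or.inl ⟨p, hip', hp, hYp.symm⟩⟩
        rw [← hYp]
        exact I_mono S.x le_rfl hpl (hmem p hip')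
      · exact ⟨u, hu, c, key (one_mem _), 1, e, Or.inr ⟨fun t h1 h2 => hno t (by omega) h2, rfl⟩⟩
  · intro l hl e hle heN hno a ha
    obtain ⟨b, hb, hab⟩ := h.normal l (by omega) e hle heN hno a (I_mono S.x (Nat.le_succ _) le_rfl ha)
    have hl' : I K S.x (i + 1) (l + 1) ≤ I K S.x (i + 1) e := I_mono S.x le_rfl hle
    by_cases hη : η l = η i
    · obtain ⟨hf, hf0, g, hg, eY⟩ := (hst l hl).1 hη
      obtain ⟨hb', h2⟩ := normal_step S (by omega) (hl' hf) hf0 (hl' hg) eY ha hb hab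
      exact ⟨_, act_mem S.toQNA _ hb', h2⟩
    · have := hl' (hmem l hl)
      rw [(hst l hl).2 hη] at this ⊢
      exact ⟨b, normal_step' S (by omega) this (h.ne l (by omega)) ha hb hab, hab⟩

structure Tower (S : SymQNA K R N r) (η : Fin N → ℤ) (Y : ℕ → Fin N → R) : Prop where
  inv : ∀ i, i ≤ N → Inv S η i (Y i)
  step : ∀ i : Fin N, Step S η i (Y i) (Y (i + 1))

open Classical in
/-- next stage of the tower -/
def next (S : SymQNA K R N r) (η : Fin N → ℤ) (i : ℕ) (Y : Fin N → R) : Fin N → R :=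
  if h : ∃ Y', ∃ hi : i < N, Step S η ⟨i, hi⟩ Y Y' then h.choose else Y

/-- the tower -/
def tow (S : SymQNA K R N r) (η : Fin N → ℤ) (y : Fin N → R) : ℕ → Fin N → R
  | 0 => y
  | i + 1 => next S η i (tow S η y i)

theorem tower_exists {c y : Fin N → R} (hs : IsPrimeSeq K S.toQNA η c y) :
    Tower S η (tow S η y) := by
  have hst : ∀ i : Fin N, Inv S η i (tow S η y i) → Step S η i (tow S η y i) (tow S η y (i + 1)) := by
    intro i h
    obtain ⟨Y', hY'⟩ := step_exists h
    have hex : ∃ Y', ∃ hi : (i : ℕ) < N, Step S η ⟨i, hi⟩ (tow S η y i) Y' := ⟨Y', i.2, hY'⟩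
    have e : tow S η y (i + 1) = hex.choose := by
      rw [tow, next, dif_pos hex]
    rw [e]
    exact hex.choose_spec.2
  have hinv : ∀ i, i ≤ N → Inv S η i (tow S η y i) := by
    intro i
    induction i with
    | zero => intro _; exact inv_zero hs
    | succ i ih =>
      intro hi
      exact step_inv (i := ⟨i, hi⟩) (ih (by omega)) (hst ⟨i, hi⟩ (ih (by omega)))
  exact ⟨hinv, fun i => hst i (hinv i i.2.le)⟩

theorem act_smul_x (S : SymQNA K R N r) {ξ : Torus K r} {b : R} {α : K} {t : Fin N}
    (h : S.act ξ b = α • S.x t) : b = (α * (ch S ξ t)⁻¹) • S.x t := by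
  apply act_inj S ξ
  rw [h, map_smul, ch_eq, smul_smul, mul_assoc, inv_mul_cancel₀ (ch_ne S _ _), mul_one]

theorem Q_base {i : Fin N} {Y : Fin N → R} (h : Inv S η i Y) (n : ℕ) : ∀ l : Fin N, (l : ℕ) = n →
    i ≤ l → ∃ α : K, S.x i * Y l = α • (Y l * S.x i) := by
  have := nontriv S
  have := nzd S
  induction n using Nat.strong_induction_on with
  | _ n ih =>
  intro l hln hil
  rcases eq_or_lt_of_le hil with rfl | hil
  · obtain ⟨u, hu, e⟩ := C1 h
    exact ⟨1, by rw [e, one_smul, mul_smul_comm, smul_mul_assoc]⟩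
  have hil' : (i : ℕ) < l := hil
  obtain ⟨u, hu, c, hc, G, e, hG⟩ := h.form l hil'.le
  have hxi : S.x i ∈ I K S.x i l := x_mem S.x i le_rfl hil'
  obtain ⟨b, hb, hb2⟩ := h.normal l hil'.le (l + 1) (Nat.lt_succ_self _) l.2
    (fun t h h' => by rw [Fin.lt_def] at h; omega) (S.x i)
    (I_mono S.x le_rfl (Nat.le_succ _) hxi)
  have O := oreF S (a := i) l hil'.le
  have key : G ∈ I K S.x i l → G ≠ 0 → S.x i * G = G * S.act (S.h l) b := by
    intro hG hG0
    have huG : u • G ∈ I K S.x i l := Subalgebra.smul_mem _ hG _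
    have t1 : Y l - (u • G) * S.x l ^ 1 ∈ Fil (I K S.x i l) (S.x l) 1 := by
      rw [e, mem_Fil_one, pow_one, smul_mul_assoc]
      simpa using hc
    have t2 : S.x i * Y l - (S.x i * (u • G)) * S.x l ^ 1 ∈ Fil (I K S.x i l) (S.x l) 1 := by
      have := left_mem_Fil hxi t1
      rwa [mul_sub, ← mul_assoc] at this
    obtain ⟨q, hq⟩ := filF S l hil'.le hb
    have hb' := mem_Fil_one.1 (O.deg huG (smul_ne S hu hG0) t1 hq (m := 1) (by
      rw [← hb2]; exact mem_Fil_succ.2 ⟨_, mul_mem hxi huG, t2⟩))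
    have t3 := O.mul_top (m := 0) huG hb' t1 (z := b) (by simp)
    rw [← hb2] at t3
    have t4 := O.top_unique (mul_mem hxi huG) (mul_mem huG (O.iter_mem hb' 1)) t2 t3
    rw [mul_smul_comm, smul_mul_assoc] at t4
    exact smul_cancel hu t4
  have fin : (∃ α : K, S.act (S.h l) b = α • S.x i) → ∃ α : K, S.x i * Y l = α • (Y l * S.x i) := by
    rintro ⟨α, hα⟩
    exact ⟨_, by rw [hb2, act_smul_x S hα, mul_smul_comm]⟩
  apply fin
  rcases hG with ⟨p, hip, hp, rfl⟩ | ⟨hno, rfl⟩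
  · have hpl : (p : ℕ) < l := hp.1
    obtain ⟨α, hα⟩ := ih p (by omega) p rfl hip
    have h1 := key (I_mono S.x le_rfl hpl (h.mem p hip)) (h.ne p hip)
    rw [hα, ← mul_smul_comm] at h1
    exact ⟨α, (mul_left_cancel₀ (h.ne p hip) h1).symm⟩
  · have h1 := key (one_mem _) one_ne_zero
    rw [one_mul, mul_one] at h1
    exact ⟨1, by rw [← h1, one_smul]⟩

theorem Qlem {Y : ℕ → Fin N → R} (T : Tower S η Y) (n : ℕ) : ∀ i : ℕ, ∀ t l : Fin N, i + n = t → t ≤ l →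
    ∃ α : K, S.x t * Y i l = α • (Y i l * S.x t) := by
  have := nontriv S
  have := nzd S
  induction n with
  | zero =>
    intro i t l hi htl
    rw [add_zero] at hi
    subst hi
    exact Q_base (T.inv t t.2.le) l l rfl htl
  | succ n ih =>
    intro i t l hi htl
    have htl' : (t : ℕ) ≤ l := htl
    have hiN : i < N := by omega
    have hil : i < (l : ℕ) := by omega
    obtain ⟨α, hα⟩ := ih (i + 1) t l (by omega) htl
    have hst := T.step ⟨i, hiN⟩ l hil
    by_cases hη : η l = η ⟨i, hiN⟩
    · obtain ⟨hf, hf0, g, hg, eY⟩ := hst.1 hη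
      have hxt : S.x t ∈ I K S.x (i + 1) (l + 1) := x_mem S.x t (by omega) (by omega)
      obtain ⟨b, hb, hb2⟩ := (T.inv i hiN.le).normal l hil.le (l + 1) (Nat.lt_succ_self _) l.2
        (fun t h h' => by rw [Fin.lt_def] at h; omega) (S.x t) (I_mono S.x (Nat.le_succ _) le_rfl hxt)
      have h1 := (normal_step S (i := ⟨i, hiN⟩) (by simp; omega) hf hf0 hg eY hxt hb hb2).2
      simp only at h1
      rw [hα, ← mul_smul_comm] at h1
      have h2 := (mul_left_cancel₀ hf0 h1).symm
      exact ⟨_, by rw [hb2, act_smul_x S h2, mul_smul_comm]⟩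
    · have := hst.2 hη
      simp only at this
      rw [← this]
      exact ⟨α, hα⟩

theorem Q {Y : ℕ → Fin N → R} (T : Tower S η Y) {i : ℕ} {t l : Fin N} (hit : i ≤ t) (htl : t ≤ l) :
    ∃ α : K, S.x t * Y i l = α • (Y i l * S.x t) := by
  obtain ⟨n, hn⟩ := Nat.exists_eq_add_of_le hit
  exact Qlem T n i t l hn.symm htl

end Peel
end QN

namespace QN

section Adj
variable {K : Type u} [Field K] {R : Type v} [Ring R] [Algebra K R] {N r : ℕ}
variable {S : SymQNA K R N r} {η : Fin N → ℤ}

theorem act_dd (S : SymQNA K R N r) (ξ : Torus K r) (j i : Fin N) :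
    S.act ξ (dd S j i) = (ch S ξ i * ch S ξ j) • dd S j i := by
  unfold dd
  rw [map_sub, map_smul, map_mul, map_mul, ch_eq, ch_eq, smul_mul_smul_comm, smul_mul_smul_comm,
    smul_sub, smul_smul, smul_smul, mul_comm (ch S ξ j), mul_comm (ch S (S.h j) i)]

/-- `x_j` quasi-commutes with everything when all defects vanish. -/
theorem qcomm (S : SymQNA K R N r) {a : ℕ} {j : Fin N}
    (h : ∀ t : Fin N, a ≤ t → t < j → dd S j t = 0) {w : R} (hw : w ∈ I K S.x a j) :
    S.x j * w = S.act (S.h j) w * S.x j := by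
  refine I_ind (P := fun w => S.x j * w = S.act (S.h j) w * S.x j) ?_ ?_ ?_ ?_ hw
  · intro t h1 h2
    have := h t h1 h2
    unfold dd at this
    rw [ch_eq, smul_mul_assoc]
    exact sub_eq_zero.1 this
  · intro s
    rw [AlgEquiv.commutes]; exact (Algebra.commutes s _).symm
  · intro y z hy hz
    rw [mul_add, hy, hz, map_add, add_mul]
  · intro y z hy hz
    rw [← mul_assoc, hy, mul_assoc, hz, map_mul, mul_assoc]

theorem exists_max_dd (hd : ¬ deltaZero K S.toQNA j) : ∃ i : Fin N, i < j ∧ dd S j i ≠ 0 ∧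
    ∀ t : Fin N, i < t → t < j → dd S j t = 0 := by
  classical
  have hne : (Finset.univ.filter fun t : Fin N => t < j ∧ dd S j t ≠ 0).Nonempty := by
    by_contra hcon
    rw [Finset.not_nonempty_iff_eq_empty] at hcon
    apply hd
    intro a ha
    rw [Rsub_eq] at ha
    unfold skewDelta
    rw [sub_eq_zero]
    refine qcomm S ?_ ha
    intro t _ ht
    by_contra h0
    have : t ∈ (Finset.univ.filter fun t : Fin N => t < j ∧ dd S j t ≠ 0) := by simp [ht, h0]
    rw [hcon] at this
    simp at this
  have h1 := Finset.max'_mem _ hne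
  simp only [Finset.mem_filter, Finset.mem_univ, true_and] at h1
  refine ⟨_, h1.1, h1.2, ?_⟩
  intro t ht1 ht2
  by_contra h0
  have : t ∈ (Finset.univ.filter fun t : Fin N => t < j ∧ dd S j t ≠ 0) := by simp [ht2, h0]
  exact absurd ht1 (not_lt.2 (Finset.le_max' _ t this))

/-- last element of a level set below `j`. -/
theorem exists_last (η : Fin N → ℤ) {i j : Fin N} (hij : i < j) : ∃ l, i ≤ l ∧ l < j ∧ η l = η i ∧
    ∀ t, l < t → t < j → η t ≠ η i := by
  classical
  have hne : (Finset.univ.filter fun t : Fin N => t < j ∧ η t = η i).Nonempty :=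
    ⟨i, by simp [hij]⟩
  have h1 := Finset.max'_mem _ hne
  simp only [Finset.mem_filter, Finset.mem_univ, true_and] at h1
  refine ⟨_, Finset.le_max' _ i (by simp [hij]), h1.1, h1.2, ?_⟩
  intro t ht1 ht2 h0
  have : t ∈ (Finset.univ.filter fun t : Fin N => t < j ∧ η t = η i) := by simp [ht2, h0]
  exact absurd ht1 (not_lt.2 (Finset.le_max' _ t this))

/-- successor in a level set. -/
theorem exists_succ (η : Fin N → ℤ) {i k : Fin N} (hik : i < k) (h : η k = η i) :
    ∃ l, l ≤ k ∧ IsPred η i l := by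
  classical
  have hne : (Finset.univ.filter fun t : Fin N => i < t ∧ η t = η i).Nonempty :=
    ⟨k, by simp [hik, h]⟩
  have h1 := Finset.min'_mem _ hne
  simp only [Finset.mem_filter, Finset.mem_univ, true_and] at h1
  refine ⟨_, Finset.min'_le _ k (by simp [hik, h]), h1.1, h1.2.symm, ?_⟩
  intro t ht1 ht2 h0
  have : t ∈ (Finset.univ.filter fun t : Fin N => i < t ∧ η t = η i) := by
    simp [ht1, h0, h1.2]
  exact absurd ht2 (not_lt.2 (Finset.min'_le _ t this))

/-- commutation of the defect with the intermediate algebra -/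
theorem dd_comm (S : SymQNA K R N r) {i j : Fin N} (hij : i < j)
    (h : ∀ t : Fin N, i < t → t < j → dd S j t = 0) {a : R} (ha : a ∈ I K S.x (i + 1) j) :
    dd S j i * a = S.act (S.h j) (S.act (S.hstar i) a) * dd S j i := by
  have hij' : (i : ℕ) < j := hij
  have OF := oreF S (a := i) j hij'.le
  have OB := oreB S (b := j) i hij'
  have hle : I K S.x (i + 1) j ≤ I K S.x i j := I_mono S.x (Nat.le_succ _) le_rfl
  have hq : ∀ w ∈ I K S.x (i + 1) j, S.x j * w = S.act (S.h j) w * S.x j :=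
    fun w hw => qcomm S (fun t h1 h2 => h t h1 h2) hw
  have hd := hle (pair S i j hij).2
  have hxi : S.x i ∈ I K S.x i j := x_mem S.x i le_rfl hij'
  set q := ch S (S.h j) i with hqdef
  set D := S.x i * a - S.act (S.hstar i) a * S.x i with hD
  have hDm : D ∈ I K S.x (i + 1) j := OB.comm a ha
  set σ := S.act (S.h j) with hσ
  set τ := S.act (S.hstar i) with hτ
  have hta : τ a ∈ I K S.x (i + 1) j := OB.map a ha
  have e1 : S.x j * S.x i = q • (S.x i * S.x j) + dd S j i := by unfold dd; rw [← hqdef]; abel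
  have e2 : S.x i * a = τ a * S.x i + D := by rw [hD]; abel
  have e3 : dd S j i * a = σ (τ a) * dd S j i +
      (q • (σ (τ a) * S.x i) + σ D - q • (S.x i * σ a)) * S.x j := by
    have h1 : S.x j * S.x i * a = σ (τ a) * (q • (S.x i * S.x j) + dd S j i) + σ D * S.x j := by
      rw [mul_assoc, e2, mul_add, ← mul_assoc, hq _ hta, hq _ hDm, mul_assoc, e1]
    have h2 : S.x i * S.x j * a = S.x i * σ a * S.x j := by
      rw [mul_assoc, hq _ ha, mul_assoc]
    have h3 : dd S j i * a = S.x j * S.x i * a - q • (S.x i * S.x j * a) := by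
      unfold dd; rw [sub_mul, smul_mul_assoc]
    rw [h3, h1, h2]
    simp only [mul_add, add_mul, sub_mul, smul_mul_assoc, mul_smul_comm, mul_assoc]
    abel
  have h4 := (OF.lin_zero (a := q • (σ (τ a) * S.x i) + σ D - q • (S.x i * σ a))
    (b := σ (τ a) * dd S j i - dd S j i * a) ?_ ?_ ?_).2
  · exact (sub_eq_zero.1 h4).symm
  · exact sub_mem (add_mem (Subalgebra.smul_mem _ (mul_mem (OF.map _ (hle hta)) hxi) _)
      (OF.map _ (hle hDm))) (Subalgebra.smul_mem _ (mul_mem hxi (OF.map _ (hle ha))) _)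
  · exact sub_mem (mul_mem (OF.map _ (hle hta)) hd) (mul_mem hd (hle ha))
  · rw [e3]; abel

theorem lam_pair (S : SymQNA K R N r) {i j : Fin N} (hij : i < j)
    (h : ∀ t : Fin N, i < t → t < j → dd S j t = 0) (hd : dd S j i ≠ 0) :
    S.lam j * S.lamstar i = 1 := by
  have := nontriv S
  have := nzd S
  obtain ⟨hp, hm⟩ := pair S i j hij
  have h1 := dd_comm S hij h hm
  have h2 := mul_right_cancel₀ hd h1
  rw [act_dd, map_smul, act_dd, smul_smul, ch_h, ch_hstar] at h2
  have h3 := smul_inj' S hd ((one_smul K _).trans h2)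
  rw [h3]
  linear_combination (-(S.lamstar i * S.lam j)) * hp

theorem stepA {Y : ℕ → Fin N → R} (T : Tower S η Y) {i j : Fin N} (hij : i < j)
    (h : ∀ t : Fin N, i < t → t < j → dd S j t = 0) (hd : dd S j i ≠ 0) : η i = η j := by
  have := nontriv S
  have := nzd S
  have hij' : (i : ℕ) < j := hij
  by_contra hη
  obtain ⟨l, hil, hlj, hηl, hlast⟩ := exists_last η hij
  have hil' : (i : ℕ) ≤ l := hil
  have hlj' : (l : ℕ) < j := hlj
  have inv := T.inv i i.2.le
  obtain ⟨f, hf, e, he, hf0, eY⟩ := (C2 inv l l rfl hil).1 hηl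
  have hle : I K S.x (i + 1) (l + 1) ≤ I K S.x (i + 1) j := I_mono S.x le_rfl hlj'
  replace hf := hle hf
  replace he := hle he
  have OF := oreF S (a := i) j hij'.le
  have OB := oreB S (b := j) i hij'
  have hle2 : I K S.x (i + 1) j ≤ I K S.x i j := I_mono S.x (Nat.le_succ _) le_rfl
  have hYm : Y i l ∈ I K S.x i j := I_mono S.x le_rfl hlj' (inv.mem l hil)
  obtain ⟨b, hb, hb2⟩ := inv.normal l hil (j + 1) (by omega) j.2 (by
    intro t h1 h2 h3
    rcases Nat.lt_or_ge (t : ℕ) j with h4 | h4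
    · exact hlast t h1 h4 (by rw [h3, hηl])
    · have : t = j := Fin.ext (by omega)
      subst this
      exact hη (by rw [h3, hηl])) (S.x j) (x_mem S.x j hij'.le (Nat.lt_succ_self _))
  obtain ⟨q, hq⟩ := filF S j hij'.le hb
  have hcm := OF.comm _ hYm
  have hxY : S.x j * Y i l = S.act (S.h j) (Y i l) * S.x j +
      (S.x j * Y i l - S.act (S.h j) (Y i l) * S.x j) := by abel
  have hb3 := OF.deg (w := Y i l) (n := 0) (m := 2) hYm (inv.ne l hil) (by simp) hq (by
    rw [← hb2]
    exact mem_Fil_two.2 ⟨_, OF.map _ hYm, _, hcm, hxY⟩)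
  obtain ⟨b1, hb1, b0, hb0, eb⟩ := mem_Fil_two.1 hb3
  have e1 : S.act (S.h j) (Y i l) * S.x j + (S.x j * Y i l - S.act (S.h j) (Y i l) * S.x j) =
      (Y i l * b1) * S.x j + Y i l * b0 := by
    rw [← hxY, hb2, eb, mul_add, mul_assoc]
  have e2 := (OF.lin_unique (OF.map _ hYm) hcm (mul_mem hYm hb1) (mul_mem hYm hb0) e1).2
  have hqc : ∀ w ∈ I K S.x (i + 1) j, S.x j * w = S.act (S.h j) w * S.x j :=
    fun w hw => qcomm S (fun t h1 h2 => h t h1 h2) hw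
  have e3 : S.x j * Y i l - S.act (S.h j) (Y i l) * S.x j = S.act (S.h j) f * dd S j i := by
    unfold dd
    rw [eY, map_add, map_mul, ch_eq, mul_add, add_mul, hqc e he, ← mul_assoc, hqc f hf, mul_sub,
      mul_smul_comm, mul_smul_comm, smul_mul_assoc, mul_assoc, mul_assoc]
    abel
  rw [e3] at e2
  have hdm := (pair S i j hij).2
  have hfd : S.act (S.h j) f * dd S j i ∈ I K S.x (i + 1) j := mul_mem (act_mem S.toQNA _ hf) hdm
  obtain ⟨q', hq'⟩ := filB S i hij' hb0
  have htop : Y i l - f * S.x i ^ 1 ∈ Fil (I K S.x (i + 1) j) (S.x i) 1 := by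
    rw [eY, mem_Fil_one]; simpa using he
  have hb00 := mem_Fil_zero.1 (OB.deg hf hf0 htop hq' (m := 0) (by
    rw [← e2]; exact mem_Fil_one.2 hfd))
  rw [hb00, mul_zero] at e2
  rcases mul_eq_zero.1 e2 with h1 | h1
  · exact hf0 ((map_eq_zero_iff _ (S.act (S.h j)).injective).1 h1)
  · exact hd h1

theorem delta_mul (S : SymQNA K R N r) (i : Fin N) (a b : R) :
    skewDelta K S.act S.x S.hstar i (a * b) = skewDelta K S.act S.x S.hstar i a * b +
      S.act (S.hstar i) a * skewDelta K S.act S.x S.hstar i b := by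
  unfold skewDelta
  rw [map_mul]
  noncomm_ring

theorem delta_smul (S : SymQNA K R N r) (i : Fin N) (s : K) (b : R) :
    skewDelta K S.act S.x S.hstar i (s • b) = s • skewDelta K S.act S.x S.hstar i b := by
  unfold skewDelta
  rw [map_smul, mul_smul_comm, smul_mul_assoc, smul_sub]

theorem delta_mem (S : SymQNA K R N r) (i : Fin N) {b : ℕ} (hb : (i : ℕ) < b) {a : R}
    (ha : a ∈ I K S.x (i + 1) b) : skewDelta K S.act S.x S.hstar i a ∈ I K S.x (i + 1) b :=
  (oreB S i hb).comm a ha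

theorem x_mul_eq (S : SymQNA K R N r) (i : Fin N) (a : R) :
    S.x i * a = S.act (S.hstar i) a * S.x i + skewDelta K S.act S.x S.hstar i a := by
  unfold skewDelta; abel

/-- nilpotency contradiction -/
theorem nil_contra (S : SymQNA K R N r) {i : Fin N} {d e f : R} {m : K} (hm : m ≠ 0) (he0 : e ≠ 0)
    (hd0 : d ≠ 0) (hd : d ∈ I K S.x (i + 1) N) (hf : S.act (S.hstar i) f = m • f)
    (he : S.act (S.hstar i) e = (m * S.lamstar i) • e)
    (df : skewDelta K S.act S.x S.hstar i f = (m * (1 - S.lamstar i)) • e)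
    (de : skewDelta K S.act S.x S.hstar i e = 0)
    (h0 : f * skewDelta K S.act S.x S.hstar i d = (S.lamstar i ^ 2 - 1) • (e * d)) : False := by
  have := nontriv S
  have := nzd S
  set δ := skewDelta K S.act S.x S.hstar i with hδ
  have key : ∀ n : ℕ, f * δ^[n + 1] d = (S.lamstar i ^ (n + 2) - 1) • (e * δ^[n] d) := by
    intro n
    induction n with
    | zero => simpa using h0
    | succ n ih =>
      have h1 := congrArg δ ih
      rw [hδ, delta_mul, delta_smul, delta_mul, ← hδ, df, de, hf, he, zero_mul, zero_add,
        ← Function.iterate_succ_apply' δ n, ← Function.iterate_succ_apply' δ (n + 1)] at h1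
      apply smul_cancel hm
      simp only [smul_mul_assoc, smul_smul] at h1 ⊢
      rw [← sub_eq_zero] at h1 ⊢
      rw [← h1]
      module
  have hne : ∀ n : ℕ, δ^[n] d ≠ 0 := by
    intro n
    induction n with
    | zero => simpa using hd0
    | succ n ih =>
      intro h
      have h1 := key n
      rw [h, mul_zero] at h1
      refine smul_ne S ?_ (mul_ne_zero he0 ih) h1.symm
      exact sub_ne_zero.2 (S.lamstar_not_root i (n + 2) (by omega))
  obtain ⟨n, hn⟩ := S.locnilRev i d (by rw [RsubRev_eq]; exact hd)
  exact hne n hn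

theorem stepB {Y : ℕ → Fin N → R} (T : Tower S η Y) {i j k : Fin N} (hik : i < k) (hk : IsPred η k j)
    (hη : η i = η j)
    (IH : ∀ i1, IsPred η i i1 → i1 < j → dd S i1 i ≠ 0)
    (h : ∀ t : Fin N, i < t → t < j → dd S j t = 0) (hd : dd S j i ≠ 0) : False := by
  have := nontriv S
  have := nzd S
  have hik' : (i : ℕ) < k := hik
  have hkj : k < j := hk.1
  have hkj' : (k : ℕ) < j := hkj
  have hij : i < j := hik.trans hkj
  have hηk : η k = η i := by rw [hk.2.1, hη]
  have inv := T.inv i i.2.le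
  obtain ⟨f, hf, e, he, hf0, eY⟩ := (C2 inv k k rfl hik.le).1 hηk
  have OB := oreB S (b := k + 1) i (by omega)
  have hle : I K S.x (i + 1) (k + 1) ≤ I K S.x (i + 1) j := I_mono S.x le_rfl hkj'
  have hYE := inv.eig k hik'.le
  have hY0 := inv.ne k hik'.le
  have hfE : Eig S f := eig_step S (by omega) hf he eY hYE
  -- e ≠ 0
  have he0 : e ≠ 0 := by
    rintro rfl
    obtain ⟨i1, hi1k, hi1⟩ := exists_succ η hik hηk
    have hd1 := IH i1 hi1 (lt_of_le_of_lt hi1k hkj)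
    have hii1 : (i : ℕ) < i1 := hi1.1
    have hi1k' : (i1 : ℕ) ≤ k := hi1k
    obtain ⟨hpq, hdm⟩ := pair S i i1 hi1.1
    obtain ⟨α, hα⟩ := Q T (i := i) (t := i1) (l := k) hii1.le hi1k
    rw [add_zero] at eY
    set p1 := ch S (S.hstar i) i1
    set q1 := ch S (S.h i1) i with hq1
    have hx1 : S.x i1 ∈ I K S.x (i + 1) (k + 1) := x_mem S.x i1 hii1 (by omega)
    have e1 : S.x i * S.x i1 = p1 • (S.x i1 * S.x i) - p1 • dd S i1 i := by
      unfold dd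
      rw [← hq1, smul_sub, smul_smul, hpq, one_smul]; abel
    have hdm' : dd S i1 i ∈ I K S.x (i + 1) (k + 1) := I_mono S.x le_rfl (by omega) hdm
    have e2 : (S.x i1 * f - (α * p1) • (f * S.x i1)) * S.x i + (α * p1) • (f * dd S i1 i) = 0 := by
      have h1 : S.x i1 * (f * S.x i) = α • (f * (S.x i * S.x i1)) := by
        rw [← mul_assoc f, ← eY]; exact hα
      rw [e1] at h1
      rw [sub_mul, mul_assoc, h1]
      simp only [mul_sub, mul_smul_comm, smul_sub, smul_smul, smul_mul_assoc, mul_assoc]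
      abel
    have e3 := (OB.lin_zero (sub_mem (mul_mem hx1 hf) (Subalgebra.smul_mem _ (mul_mem hf hx1) _))
      (Subalgebra.smul_mem _ (mul_mem hf hdm') _) e2).2
    have hα0 : α ≠ 0 := by
      rintro rfl
      rw [zero_smul] at hα
      exact mul_ne_zero (x_ne S i1) hY0 hα
    exact smul_ne S (mul_ne_zero hα0 (ch_ne S _ _)) (mul_ne_zero hf0 hd1) e3
  obtain ⟨m, hm0, hm⟩ := hfE.spec hf0 (S.hstar i)
  obtain ⟨n, hn0, hn⟩ := hfE.spec hf0 (S.h j)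
  -- eigenvalue of e
  have eig_e : ∀ ξ s, S.act ξ f = s • f → S.act ξ e = (s * ch S ξ i) • e := by
    intro ξ s hs
    obtain ⟨k', hk'⟩ := hYE ξ
    have h1 : ((s * ch S ξ i) • f) * S.x i + S.act ξ e = (k' • f) * S.x i + k' • e := by
      rw [eY, map_add, map_mul, ch_eq, hs, smul_mul_smul_comm, smul_add] at hk'
      rw [smul_mul_assoc, hk', smul_mul_assoc]
    obtain ⟨h2, h3⟩ := OB.lin_unique (Subalgebra.smul_mem _ hf _) (act_mem S.toQNA _ he)
      (Subalgebra.smul_mem _ hf _) (Subalgebra.smul_mem _ he _) h1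
    rw [h3, smul_inj' S hf0 h2]
  have hme := eig_e _ _ hm
  have hne := eig_e _ _ hn
  rw [ch_hstar] at hme
  have hii : (i : ℕ) < k + 1 := by omega
  obtain ⟨μ, hμ⟩ := Q T (i := i) (t := i) (l := k) le_rfl hik.le
  have hquad : (m • f) * S.x i ^ 2 + (skewDelta K S.act S.x S.hstar i f + (m * S.lamstar i) • e) * S.x i
      + skewDelta K S.act S.x S.hstar i e = (μ • f) * S.x i ^ 2 + (μ • e) * S.x i + 0 := by
    have h1 : S.x i * (f * S.x i + e) = μ • ((f * S.x i + e) * S.x i) := by rw [← eY]; exact hμ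
    rw [mul_add, ← mul_assoc, x_mul_eq S i f, x_mul_eq S i e, hm, hme] at h1
    rw [add_zero]
    calc _ = (m • f * S.x i + skewDelta K S.act S.x S.hstar i f) * S.x i +
          ((m * S.lamstar i) • e * S.x i + skewDelta K S.act S.x S.hstar i e) := by noncomm_ring
      _ = _ := by rw [h1, add_mul, smul_add, pow_two, mul_assoc, smul_mul_assoc, smul_mul_assoc]
  obtain ⟨q1, q2, q3⟩ := OB.quad_unique (Subalgebra.smul_mem _ hf _)
    (add_mem (delta_mem S i hii hf) (Subalgebra.smul_mem _ he _)) (delta_mem S i hii he)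
    (Subalgebra.smul_mem _ hf _) (Subalgebra.smul_mem _ he _) (zero_mem _) hquad
  have hmμ := smul_inj' S hf0 q1
  have hdf : skewDelta K S.act S.x S.hstar i f = (m * (1 - S.lamstar i)) • e := by
    rw [← hmμ] at q2
    rw [eq_sub_of_add_eq q2]; module
  -- commutation of d with Y
  obtain ⟨hpq, hdm⟩ := pair S i j hij
  set d := dd S j i with hddef
  obtain ⟨b, hb, hb2⟩ := inv.normal k hik'.le j hkj' j.2.le (fun t h1 h2 h3 =>
    hk.2.2 t h1 h2 (by rw [h3, hk.2.1])) d (I_mono S.x (Nat.le_succ _) le_rfl hdm)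
  obtain ⟨hbm, hbf⟩ := normal_step S (e := j) hij (hle hf) hf0 (hle he) eY hdm hb hb2
  have OB2 := oreB S (b := j) i hij
  have hdf2 := dd_comm S hij h (hle hf)
  have hde2 := dd_comm S hij h (hle he)
  rw [← hddef] at hdf2 hde2
  rw [hm, map_smul, hn, smul_smul] at hdf2
  rw [hme, map_smul, hne, smul_smul] at hde2
  set p := ch S (S.hstar i) j with hp
  set q := ch S (S.h j) i with hq
  have htd : S.act (S.hstar i) d = (S.lamstar i * p) • d := by
    rw [hddef, act_dd, ch_hstar]
  have hp0 : p ≠ 0 := ch_ne S _ _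
  have hl0 := lamstar_ne S i
  have hbd : b = (m * n * (S.lamstar i * p)⁻¹) • d := by
    apply act_inj S (S.hstar i)
    rw [map_smul, htd, smul_smul, mul_assoc, inv_mul_cancel₀ (mul_ne_zero hl0 hp0), mul_one]
    apply mul_left_cancel₀ hf0
    rw [← hbf, hdf2, smul_mul_assoc, mul_smul_comm]
  set ℓ := S.lamstar i with hℓ
  have h0 : f * skewDelta K S.act S.x S.hstar i d = (ℓ ^ 2 - 1) • (e * d) := by
    have h1 : (d * f) * S.x i + d * e = (f * S.act (S.hstar i) b) * S.x i +
        (f * skewDelta K S.act S.x S.hstar i b + e * b) := by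
      have h2 := hb2
      rw [eY, mul_add, add_mul, mul_assoc f, x_mul_eq S i b] at h2
      rw [mul_assoc, h2]
      noncomm_ring
    have h2 := (OB2.lin_unique (mul_mem hdm (hle hf)) (mul_mem hdm (hle he))
      (mul_mem (hle hf) (OB2.map _ hbm))
      (add_mem (mul_mem (hle hf) (delta_mem S i hij hbm)) (mul_mem (hle he) hbm)) h1).2
    rw [hde2, hbd, delta_smul, smul_mul_assoc, mul_smul_comm, mul_smul_comm, ← smul_add] at h2
    have hmn : m * n * (ℓ * p)⁻¹ ≠ 0 :=
      mul_ne_zero (mul_ne_zero hm0 hn0) (inv_ne_zero (mul_ne_zero hl0 hp0))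
    have h3 : m * ℓ * (n * q) = m * n * (ℓ * p)⁻¹ * ℓ ^ 2 := by
      field_simp
      linear_combination hpq
    rw [h3, mul_smul (m * n * (ℓ * p)⁻¹)] at h2
    have h4 := smul_cancel hmn h2
    rw [sub_smul, one_smul, h4]; abel
  exact nil_contra S hm0 he0 hd (I_N S.x _ _ hdm) hm hme hdf q3 h0

theorem adj {c y : Fin N → R} (hs : IsPrimeSeq K S.toQNA η c y) {Y : ℕ → Fin N → R}
    (T : Tower S η Y) (n : ℕ) : ∀ k j : Fin N, (j : ℕ) = n → IsPred η k j →
    (∀ t : Fin N, k < t → t < j → dd S j t = 0) ∧ dd S j k ≠ 0 := by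
  induction n using Nat.strong_induction_on with
  | _ n ih =>
  intro k j hj hk
  obtain ⟨i, hij, hd, hmax⟩ := exists_max_dd (not_deltaZero hs hk)
  have hη := stepA T hij hmax hd
  have hik : i ≤ k := by
    by_contra hcon
    exact hk.2.2 i (not_le.1 hcon) hij hη
  rcases eq_or_lt_of_le hik with rfl | hik
  · exact ⟨hmax, hd⟩
  · exfalso
    refine stepB T hik hk hη ?_ hmax hd
    intro i1 hi1 hlt
    have hlt' : (i1 : ℕ) < j := hlt
    exact (ih i1 (by omega) i i1 rfl hi1).2

end Adj
end QN

namespace QN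

section Fin
variable {K : Type u} [Field K] {R : Type v} [Ring R] [Algebra K R] {N r : ℕ}
variable {S : SymQNA K R N r} {η : Fin N → ℤ}

theorem Sp_prod (S : SymQNA K R N r) (j : Fin N) (n : ℕ) {a b : ℕ} {A B : R} (hA : A ∈ I K S.x a j)
    (hB : B ∈ I K S.x (j + 1) b) : A * S.x j ^ n * B ∈ Sp K S.x {m | m j = n} := by
  have h1 := mul_pow_mem_Sp S.x j n (Sp_mono (K := K) S.x (T' := {m | ∀ t, m t ≠ 0 → (t : ℕ) < j})
    (by rintro m hm t ht; exact (hm t ht).2) (I_span S hA))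
  have h2 := I_span S hB
  refine Sp_mul S.x ?_ h1 h2
  rintro m1 ⟨h1, h1'⟩ m2 h2
  rw [mono_mul S.x m1 m2 j (fun t ht => Nat.lt_succ_iff.1 (h1' t ht))
    (fun t ht => (Nat.le_succ _).trans (h2 t ht).1)]
  apply mono_mem_Sp
  have h0 : m2 j = 0 := by
    by_contra h
    have := (h2 j h).1
    omega
  simp [h1, h0]

theorem mono_split (S : SymQNA K R N r) (j : Fin N) {a b : ℕ} {m : Fin N → ℕ}
    (hm : ∀ t, m t ≠ 0 → a ≤ (t : ℕ) ∧ (t : ℕ) < b) : ∃ A ∈ I K S.x a j, ∃ B ∈ I K S.x (j + 1) b,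
    ordMonomial S.x m = A * S.x j ^ (m j) * B := by
  classical
  refine ⟨ordMonomial S.x (fun t => if t < j then m t else 0), mono_mem_I S.x ?_,
    ordMonomial S.x (fun t => if j < t then m t else 0), mono_mem_I S.x ?_, ?_⟩
  · intro t ht
    by_cases h : t < j
    · rw [if_pos h] at ht; exact ⟨(hm t ht).1, h⟩
    · rw [if_neg h] at ht; exact absurd rfl ht
  · intro t ht
    by_cases h : j < t
    · rw [if_pos h] at ht; exact ⟨h, (hm t ht).2⟩
    · rw [if_neg h] at ht; exact absurd rfl ht
  · rw [← mono_single, mono_mul S.x _ _ j, mono_mul S.x _ _ j]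
    · congr 1
      ext t
      rcases lt_trichotomy t j with h | rfl | h
      · simp [h, h.ne, not_lt.2 h.le]
      · simp
      · simp [h, h.ne', not_lt.2 h.le]
    · intro t ht
      by_contra hlt
      have hlt' : j < t := by rw [Fin.lt_def]; omega
      apply ht
      simp [hlt'.ne', not_lt.2 hlt'.le]
    · intro t ht
      by_contra hlt
      have hlt' : ¬ j < t := by rw [Fin.lt_def]; omega
      apply ht
      simp [hlt']
    · intro t ht
      by_contra hlt
      have hlt' : ¬ t < j := by rw [Fin.lt_def]; omega
      apply ht
      simp [hlt']
    · intro t ht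
      by_contra hlt
      have hlt' : t ≠ j := by rintro rfl; omega
      apply ht
      simp [hlt']

theorem Sp_left (S : SymQNA K R N r) {j : Fin N} {a b : ℕ}
    (hq : ∀ w ∈ I K S.x a j, S.x j * w = S.act (S.h j) w * S.x j) {w : R} (hw : w ∈ I K S.x a b) :
    S.x j * w ∈ Sp K S.x {m | m j ≠ 0} := by
  have h := I_span S hw
  unfold Sp at h
  clear hw
  induction h using Submodule.span_induction with
  | mem y hy =>
    obtain ⟨m, hm, rfl⟩ := hy
    obtain ⟨A, hA, B, hB, e⟩ := mono_split S j hm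
    have h1 := Sp_prod S j (m j + 1) (act_mem S.toQNA (S.h j) hA) hB
    rw [e, ← mul_assoc, ← mul_assoc, hq A hA, mul_assoc _ (S.x j), ← pow_succ']
    exact Sp_mono S.x (fun m' (h : m' j = _) => by simp [h]) h1
  | zero => rw [mul_zero]; exact zero_mem _
  | add y z _ _ hy hz => rw [mul_add]; exact add_mem hy hz
  | smul s y _ hy => rw [mul_smul_comm]; exact Submodule.smul_mem _ _ hy

theorem Sp_right (S : SymQNA K R N r) {j : Fin N} {a b : ℕ}
    (hq : ∀ w ∈ I K S.x (j + 1) b, S.x j * w = S.act (S.hstar j) w * S.x j) {w : R}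
    (hw : w ∈ I K S.x a b) : w * S.x j ∈ Sp K S.x {m | m j ≠ 0} := by
  have h := I_span S hw
  unfold Sp at h
  clear hw
  induction h using Submodule.span_induction with
  | mem y hy =>
    obtain ⟨m, hm, rfl⟩ := hy
    obtain ⟨A, hA, B, hB, e⟩ := mono_split S j hm
    have hB' : (S.act (S.hstar j)).symm B ∈ I K S.x (j + 1) b := by
      rw [act_symm]; exact act_mem S.toQNA _ hB
    have h1 := Sp_prod S j (m j + 1) hA hB'
    have h2 := hq _ hB'
    rw [AlgEquiv.apply_symm_apply] at h2
    rw [e, mul_assoc, ← h2, ← mul_assoc, mul_assoc A, ← pow_succ]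
    exact Sp_mono S.x (fun m' (h : m' j = _) => by simp [h]) h1
  | zero => rw [zero_mul]; exact zero_mem _
  | add y z _ _ hy hz => rw [add_mul]; exact add_mem hy hz
  | smul s y _ hy => rw [smul_mul_assoc]; exact Submodule.smul_mem _ _ hy

/-- explicit form of `Y` for adjacent indices -/
theorem Y_adj {Y : ℕ → Fin N → R} (T : Tower S η Y) {k j : Fin N} (hk : IsPred η k j) :
    ∃ U : K, U ≠ 0 ∧ Y k j = U • (S.x k * S.x j -
      (ch S (S.h j) k * (S.lam j - 1))⁻¹ • dd S j k) ∧
      S.x j * Y k j = ch S (S.h j) k • (Y k j * S.x j) := by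
  have := nontriv S
  have := nzd S
  have hkj' : (k : ℕ) < j := hk.1
  have inv := T.inv k k.2.le
  have OF := oreF S (a := k) j hkj'.le
  obtain ⟨u, hu, c, hc, G, e, hG⟩ := inv.form j hkj'.le
  obtain ⟨u', hu', e'⟩ := C1 inv
  have hGk : G = u' • S.x k := by
    rcases hG with ⟨p, hp, hp2, rfl⟩ | ⟨h, _⟩
    · have hp' : k ≤ p := hp
      rcases eq_or_lt_of_le hp' with rfl | h
      · exact e'
      · exact absurd hp2.2.1 (hk.2.2 p h hp2.1)
    · exact absurd hk.2.1 (h k le_rfl hk.1)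
  rw [hGk, smul_mul_assoc, smul_smul] at e
  have hU : u * u' ≠ 0 := mul_ne_zero hu hu'
  set U := u * u' with hUd
  set q := ch S (S.h j) k with hq
  have hq0 : q ≠ 0 := ch_ne S _ _
  have hxk : S.x k ∈ I K S.x k j := x_mem S.x k le_rfl hkj'
  have hd : dd S j k ∈ I K S.x k j := I_mono S.x (Nat.le_succ _) le_rfl (pair S k j hk.1).2
  obtain ⟨α, hα⟩ := Q T (i := k) (t := j) hkj'.le le_rfl
  obtain ⟨μ, hμ⟩ := inv.eig j hkj'.le (S.h j)
  have hsc := OF.map c hc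
  have hdc := OF.comm c hc
  -- eigenvalue of `c`
  have hce : S.act (S.h j) c = (q * S.lam j) • c := by
    have h1 : (U • (q * S.lam j) • S.x k) * S.x j + (-S.act (S.h j) c) =
        ((μ * U) • S.x k) * S.x j + (-(μ • c)) := by
      rw [e, map_sub, map_smul, map_mul, ch_eq, ch_eq, ch_h, ← hq] at hμ
      simp only [smul_mul_assoc, mul_smul_comm, smul_smul, smul_sub] at hμ ⊢
      rw [← sub_eq_add_neg, ← sub_eq_add_neg, ← hμ, mul_comm q]
      try rfl
    obtain ⟨h2, h3⟩ := OF.lin_unique (Subalgebra.smul_mem _ (Subalgebra.smul_mem _ hxk _) _)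
      (neg_mem hsc) (Subalgebra.smul_mem _ hxk _) (neg_mem (Subalgebra.smul_mem _ hc _)) h1
    rw [smul_smul] at h2
    have h4 := smul_inj' S (x_ne S k) h2
    have h5 : μ = q * S.lam j := by
      apply mul_right_cancel₀ hU; rw [← h4]; ring
    rw [← h5]; exact neg_injective h3
  have e1 : S.x j * S.x k = q • (S.x k * S.x j) + dd S j k := by unfold dd; rw [← hq]; abel
  have hquad : ((U * q) • S.x k) * S.x j ^ 2 + (U • dd S j k - (q * S.lam j) • c) * S.x j +
      (-(S.x j * c - S.act (S.h j) c * S.x j)) =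
      ((α * U) • S.x k) * S.x j ^ 2 + (-(α • c)) * S.x j + 0 := by
    have h1 := hα
    rw [e, mul_sub, mul_smul_comm, ← mul_assoc, e1] at h1
    have h2 : S.x j * c = (q * S.lam j) • (c * S.x j) + (S.x j * c - S.act (S.h j) c * S.x j) := by
      rw [hce, smul_mul_assoc]; abel
    rw [h2] at h1
    rw [← sub_eq_zero] at h1 ⊢
    refine Eq.trans ?_ h1
    simp only [pow_two, add_mul, sub_mul, smul_mul_assoc, smul_smul, neg_mul, smul_sub, smul_add,
      mul_assoc]
    abel
  obtain ⟨h1, h2, -⟩ := OF.quad_unique (Subalgebra.smul_mem _ hxk _)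
    (sub_mem (Subalgebra.smul_mem _ hd _) (Subalgebra.smul_mem _ hc _)) (neg_mem hdc)
    (Subalgebra.smul_mem _ hxk _) (neg_mem (Subalgebra.smul_mem _ hc _)) (zero_mem _) hquad
  have h3 := smul_inj' S (x_ne S k) h1
  have h4 : α = q := by apply mul_right_cancel₀ hU; rw [← h3]; ring
  subst h4
  refine ⟨U, hU, ?_, hα⟩
  have hl1 : S.lam j - 1 ≠ 0 := sub_ne_zero.2 (lam_ne_one S j)
  have h5 : (q * (S.lam j - 1)) • c = U • dd S j k := by
    rw [← sub_eq_zero] at h2 ⊢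
    rw [← neg_eq_zero, ← h2]; module
  rw [e, smul_sub, smul_comm U, ← h5, smul_smul, inv_mul_cancel₀ (mul_ne_zero hq0 hl1), one_smul]

theorem dd_zero {Y : ℕ → Fin N → R} (T : Tower S η Y) {j l : Fin N} (hj : IsPred η j l)
    (hadj : ∀ t : Fin N, j < t → t < l → dd S l t = 0) (t : Fin N) (h1 : j < t) (h2 : t < l) :
    dd S t j = 0 := by
  have := nontriv S
  have := nzd S
  have hjl' : (j : ℕ) < l := hj.1
  have h1' : (j : ℕ) < t := h1
  have h2' : (t : ℕ) < l := h2
  have OF := oreF S (a := j) l hjl'.le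
  have OB := oreB S (b := l) j hjl'
  obtain ⟨U, hU, e, -⟩ := Y_adj T hj
  obtain ⟨α, hα⟩ := Q T (i := j) h1'.le h2.le
  have hxj : S.x j ∈ I K S.x j l := x_mem S.x j le_rfl hjl'
  have hxt : S.x t ∈ I K S.x j l := x_mem S.x t h1'.le h2'
  have hxt' : S.x t ∈ I K S.x (j + 1) l := x_mem S.x t h1' h2'
  have hd : dd S l j ∈ I K S.x j l := I_mono S.x (Nat.le_succ _) le_rfl (pair S j l hj.1).2
  have hlt : S.x l * S.x t = ch S (S.h l) t • (S.x t * S.x l) := by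
    have := hadj t h1 h2
    unfold dd at this; exact sub_eq_zero.1 this
  set q' := ch S (S.h l) t
  set κ := (ch S (S.h l) j * (S.lam l - 1))⁻¹
  rw [e, mul_smul_comm, smul_mul_assoc, smul_comm α] at hα
  have h3 := smul_cancel hU hα
  have h4 : (S.x t * S.x j) * S.x l + (-(κ • (S.x t * dd S l j))) =
      ((α * q') • (S.x j * S.x t)) * S.x l + (-((α * κ) • (dd S l j * S.x t))) := by
    rw [mul_sub, sub_mul, mul_assoc (S.x j), hlt] at h3
    simp only [smul_mul_assoc, mul_smul_comm, smul_smul, smul_sub, mul_assoc] at h3 ⊢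
    rw [← sub_eq_add_neg, ← sub_eq_add_neg, h3]
  have h5 := (OF.lin_unique (mul_mem hxt hxj) (neg_mem (Subalgebra.smul_mem _ (mul_mem hxt hd) _))
    (Subalgebra.smul_mem _ (mul_mem hxj hxt) _)
    (neg_mem (Subalgebra.smul_mem _ (mul_mem hd hxt) _)) h4).1
  have h6 : dd S t j = (α * q' - ch S (S.h t) j) • (S.x j * S.x t) := by
    unfold dd; rw [h5, sub_smul]
  set s := α * q' - ch S (S.h t) j
  have hdm : dd S t j ∈ I K S.x (j + 1) l := I_mono S.x le_rfl h2'.le (pair S j t h1).2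
  have h7 := OB.lin_zero (a := s • S.act (S.hstar j) (S.x t))
    (b := s • skewDelta K S.act S.x S.hstar j (S.x t) - dd S t j)
    (Subalgebra.smul_mem _ (OB.map _ hxt') _)
    (sub_mem (Subalgebra.smul_mem _ (delta_mem S j hjl' hxt') _) hdm) (by
      rw [h6, x_mul_eq S j (S.x t), smul_add, smul_mul_assoc]; abel)
  have h8 := h7.1
  rw [ch_eq, smul_smul] at h8
  have h9 : s = 0 := by
    by_contra hs
    exact smul_ne S (mul_ne_zero hs (ch_ne S (S.hstar j) t)) (x_ne S t) h8
  rw [h6, h9, zero_smul]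

theorem qcomm' (S : SymQNA K R N r) {b : ℕ} {j : Fin N}
    (h : ∀ t : Fin N, j < t → (t : ℕ) < b → dd S t j = 0) {w : R} (hw : w ∈ I K S.x (j + 1) b) :
    S.x j * w = S.act (S.hstar j) w * S.x j := by
  refine I_ind (P := fun w => S.x j * w = S.act (S.hstar j) w * S.x j) ?_ ?_ ?_ ?_ hw
  · intro t h1 h2
    have h3 := h t h1 h2
    unfold dd at h3
    rw [ch_eq, smul_mul_assoc, sub_eq_zero.1 h3, smul_smul, (pair S j t h1).1, one_smul]
  · intro s
    rw [AlgEquiv.commutes]; exact (Algebra.commutes s _).symm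
  · intro y z hy hz
    rw [mul_add, hy, hz, map_add, add_mul]
  · intro y z hy hz
    rw [← mul_assoc, hy, mul_assoc, hz, map_mul, mul_assoc]

theorem left_zero (S : SymQNA K R N r) {k : Fin N} {b : ℕ} (hkb : (k : ℕ) < b) {A B : R}
    (hA : A ∈ I K S.x (k + 1) b) (hB : B ∈ I K S.x (k + 1) b) (h : S.x k * A + B = 0) :
    A = 0 ∧ B = 0 := by
  have OB := oreB S k hkb
  have h1 := (OB.lin_zero (OB.map A hA) (add_mem (delta_mem S k hkb hA) hB) (by
    rw [← h, x_mul_eq S k A]; abel)).1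
  have h2 : A = 0 := (map_eq_zero_iff _ (S.act (S.hstar k)).injective).1 h1
  refine ⟨h2, ?_⟩
  rw [h2, mul_zero, zero_add] at h
  exact h

theorem stage_eq {Y : ℕ → Fin N → R} (T : Tower S η Y) {k j l : Fin N} (hjl : j < l)
    (h : ∀ t : Fin N, k < t → t < j → η t ≠ η l) (n : ℕ) (h1 : (k : ℕ) + 1 ≤ n) (h2 : n ≤ j) :
    Y n l = Y (k + 1) l := by
  induction n, h1 using Nat.le_induction with
  | base => rfl
  | succ n hn ih =>
    have hjl' : (j : ℕ) < l := hjl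
    have hnN : n < N := by omega
    have h3 := (T.step ⟨n, hnN⟩ l (by rw [Fin.lt_def]; simp; omega)).2
      (h ⟨n, hnN⟩ (by rw [Fin.lt_def]; simp; omega) (by rw [Fin.lt_def]; simp; omega)).symm
    rw [← ih (by omega)]
    exact h3

end Fin
end QN

namespace QN

section Main
variable {K : Type u} [Field K] {R : Type v} [Ring R] [Algebra K R] {N r : ℕ}
variable {S : SymQNA K R N r} {η : Fin N → ℤ}

/-- form of `Y k l` for a triple of adjacent indices -/
theorem Y_triple {Y : ℕ → Fin N → R} (T : Tower S η Y) {k j l : Fin N} (hk : IsPred η k j)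
    (hj : IsPred η j l) : ∃ V V2 : K, V ≠ 0 ∧ ∃ w ∈ I K S.x (k + 1) l,
    Y k l = V • (Y k j * S.x l) - (V2 • (S.x k * dd S l j) + w) := by
  have := nontriv S
  have := nzd S
  have hkj' : (k : ℕ) < j := hk.1
  have hjl' : (j : ℕ) < l := hj.1
  have hkl : k < l := hk.1.trans hj.1
  have hkl' : (k : ℕ) < l := hkl
  have inv := T.inv k k.2.le
  have hηl : η l = η k := by rw [hk.2.1, hj.2.1]
  obtain ⟨u, hu, c, hc, G, e, hG⟩ := inv.form l hkl'.le
  have hGj : G = Y k j := by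
    rcases hG with ⟨p, hp, hp2, rfl⟩ | ⟨h, _⟩
    · rcases lt_trichotomy p j with h | rfl | h
      · exact absurd hj.2.1 (hp2.2.2 j h hj.1)
      · rfl
      · exact absurd hp2.2.1 (hj.2.2 p h hp2.1)
    · exact absurd hj.2.1 (h j hkj'.le hj.1)
  subst hGj
  obtain ⟨hf, hf0, e0, he0, eY⟩ := (T.step k l hkl).1 hηl
  have hst : Y j l = Y (k + 1) l := stage_eq T hj.1 (fun t h1 h2 h3 =>
    hk.2.2 t h1 h2 (by rw [h3, hj.2.1])) j hkj' le_rfl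
  obtain ⟨U, hU, eU, -⟩ := Y_adj T hk
  obtain ⟨U', hU', eU', -⟩ := Y_adj T hj
  set κ1 := (ch S (S.h j) k * (S.lam j - 1))⁻¹
  set κ2 := (ch S (S.h l) j * (S.lam l - 1))⁻¹
  have OB := oreB S (b := l) k hkl'
  have OF := oreF S (a := k + 1) l hkl'
  have hxj : S.x j ∈ I K S.x (k + 1) l := x_mem S.x j hkj' hjl'
  have hd1 : dd S j k ∈ I K S.x (k + 1) l := I_mono S.x le_rfl hjl'.le (pair S k j hk.1).2
  have hd2 : dd S l j ∈ I K S.x (k + 1) l := I_mono S.x (by omega) le_rfl (pair S j l hj.1).2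
  have hG2 : Y k j = (U • S.act (S.hstar k) (S.x j)) * S.x k +
      U • (skewDelta K S.act S.x S.hstar k (S.x j) - κ1 • dd S j k) := by
    rw [eU, x_mul_eq S k (S.x j), smul_mul_assoc, ← smul_add]
    congr 1; abel
  obtain ⟨c1, hc1, c0, hc0, ec, ef⟩ := calc_lem S hkl hf he0 eY
    (Subalgebra.smul_mem _ (OB.map _ hxj) _)
    (Subalgebra.smul_mem _ (sub_mem (delta_mem S k hkl' hxj) (Subalgebra.smul_mem _ hd1 _)) _)
    hG2 e hc
  rw [← hst, eU'] at ef
  have hc1' : c1 = (U' * κ2) • dd S l j := by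
    have h1 : (U' • S.x j) * S.x l + (-((U' * κ2) • dd S l j)) =
        ((u * ch S (S.hstar k) l) • (U • S.act (S.hstar k) (S.x j))) * S.x l + (-c1) := by
      rw [← sub_eq_add_neg, ← sub_eq_add_neg, smul_mul_assoc _ (U • _), ← ef, smul_sub, smul_mul_assoc,
        smul_smul]
    have h2 := (OF.lin_unique (Subalgebra.smul_mem _ hxj _)
      (neg_mem (Subalgebra.smul_mem _ hd2 _))
      (Subalgebra.smul_mem _ (Subalgebra.smul_mem _ (OB.map _ hxj) _) _) (neg_mem hc1) h1).2
    exact (neg_injective h2).symm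
  have hτ := x_mul_eq S k (dd S l j)
  rw [act_dd] at hτ
  set ε := ch S (S.hstar k) j * ch S (S.hstar k) l with hε
  have hε0 : ε ≠ 0 := mul_ne_zero (ch_ne S _ _) (ch_ne S _ _)
  refine ⟨u, U' * κ2 * ε⁻¹, hu, c0 - (U' * κ2 * ε⁻¹) • skewDelta K S.act S.x S.hstar k (dd S l j),
    sub_mem hc0 (Subalgebra.smul_mem _ (delta_mem S k hkl' hd2) _), ?_⟩
  rw [e, ec, hc1', hτ, smul_add, smul_mul_assoc, smul_mul_assoc, smul_smul _ ε,
    inv_mul_cancel_right₀ hε0]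
  congr 1; abel

theorem lam_lamstar {c y : Fin N → R} (hs : IsPrimeSeq K S.toQNA η c y) {Y : ℕ → Fin N → R}
    (T : Tower S η Y) {k j l : Fin N} (hk : IsPred η k j) (hj : IsPred η j l) :
    S.lam j * S.lamstar j = 1 := by
  have := nontriv S
  have := nzd S
  have hkj' : (k : ℕ) < j := hk.1
  have hjl' : (j : ℕ) < l := hj.1
  have hkl : k < l := hk.1.trans hj.1
  have hkl' : (k : ℕ) < l := hkl
  obtain ⟨a1, a2⟩ := adj hs T j k j rfl hk
  obtain ⟨b1, b2⟩ := adj hs T l j l rfl hj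
  have hq1 : ∀ w ∈ I K S.x (k + 1) j, S.x j * w = S.act (S.h j) w * S.x j :=
    fun w hw => qcomm S (fun t h1 h2 => a1 t h1 h2) hw
  have hq2 : ∀ w ∈ I K S.x (j + 1) l, S.x j * w = S.act (S.hstar j) w * S.x j :=
    fun w hw => qcomm' S (fun t h1 h2 => dd_zero T hj b1 t h1 h2) hw
  obtain ⟨U, hU, eU, hjY⟩ := Y_adj T hk
  obtain ⟨V, V2, hV, w, hw, eY⟩ := Y_triple T hk hj
  obtain ⟨α, hα⟩ := Q T (i := k) (t := j) (l := l) hkj'.le hj.1.le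
  have hY0 := (T.inv k k.2.le).ne j hkj'.le
  have hYm : Y k j ∈ I K S.x k l := I_mono S.x le_rfl hjl' ((T.inv k k.2.le).mem j hkj'.le)
  obtain ⟨hp, hd2m⟩ := pair S j l hj.1
  have hd1m := (pair S k j hk.1).2
  have hxd2 := hq2 _ hd2m
  rw [act_dd, ch_hstar, smul_mul_assoc] at hxd2
  have e1 : S.x j * S.x k = ch S (S.h j) k • (S.x k * S.x j) + dd S j k := by unfold dd; abel
  have e2 : S.x l * S.x j = ch S (S.h l) j • (S.x j * S.x l) + dd S l j := by unfold dd; abel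
  set a := ch S (S.h j) k with ha
  set b := ch S (S.h l) j with hb
  set β := ch S (S.hstar j) l with hβ
  set d1 := dd S j k
  set d2 := dd S l j
  set κ := (a * (S.lam j - 1))⁻¹ with hκ
  set G := Y k j with hG
  have ha0 : a ≠ 0 := ch_ne S _ _
  have hb0 : b ≠ 0 := ch_ne S _ _
  have OF := oreF S (a := k) l hkl'.le
  have hle : I K S.x (k + 1) l ≤ I K S.x k l := I_mono S.x (Nat.le_succ _) le_rfl
  have hxk : S.x k ∈ I K S.x k l := x_mem S.x k le_rfl hkl'
  have hxj' : S.x j ∈ I K S.x (k + 1) l := x_mem S.x j hkj' hjl'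
  have hxj := hle hxj'
  have hd1' : d1 ∈ I K S.x (k + 1) l := I_mono S.x le_rfl hjl'.le hd1m
  have hd2' : d2 ∈ I K S.x (k + 1) l := I_mono S.x (by omega) le_rfl hd2m
  have h1 : ((V * a) • (G * S.x j)) * S.x l + (-(S.x j * (V2 • (S.x k * d2) + w))) =
      ((α * V * b) • (G * S.x j)) * S.x l +
        ((α * V) • (G * d2) - α • ((V2 • (S.x k * d2) + w) * S.x j)) := by
    have h2 := hα
    rw [eY, mul_sub, sub_mul, mul_smul_comm, ← mul_assoc, hjY, smul_mul_assoc _ (G * S.x l),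
      mul_assoc G (S.x l), e2] at h2
    rw [← sub_eq_zero] at h2 ⊢
    refine Eq.trans ?_ h2
    generalize V2 • (S.x k * d2) + w = z
    simp only [mul_add, smul_mul_assoc, mul_smul_comm, mul_assoc, smul_add, smul_sub, smul_smul]
    abel
  have hzm : V2 • (S.x k * d2) + w ∈ I K S.x k l :=
    add_mem (Subalgebra.smul_mem _ (mul_mem hxk (hle hd2')) _) (hle hw)
  obtain ⟨h2, h3⟩ := OF.lin_unique (Subalgebra.smul_mem _ (mul_mem hYm hxj) _)
    (neg_mem (mul_mem hxj hzm)) (Subalgebra.smul_mem _ (mul_mem hYm hxj) _)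
    (sub_mem (Subalgebra.smul_mem _ (mul_mem hYm (hle hd2')) _)
      (Subalgebra.smul_mem _ (mul_mem hzm hxj) _)) h1
  have hab : a = α * b := by
    have := smul_inj' S (mul_ne_zero hY0 (x_ne S j)) h2
    apply mul_left_cancel₀ hV; rw [this]; ring
  -- compare coefficients of `x_k`
  have h4 : S.x k * ((α * V * U) • (S.x j * d2) - (α * V2) • (d2 * S.x j) + (V2 * a) • (S.x j * d2))
      + (S.x j * w - α • (w * S.x j) + (V2 - α * V * U * κ) • (d1 * d2)) = 0 := by
    rw [eU] at h3
    have h5 : S.x j * (S.x k * d2) = a • (S.x k * (S.x j * d2)) + d1 * d2 := by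
      rw [← mul_assoc, e1, add_mul, smul_mul_assoc, mul_assoc]
    rw [mul_add, mul_smul_comm, h5] at h3
    rw [eq_comm, ← sub_eq_zero] at h3
    refine Eq.trans ?_ h3
    simp only [mul_add, add_mul, mul_sub, sub_mul, smul_mul_assoc, mul_smul_comm, mul_assoc, smul_add,
      smul_sub, smul_smul]
    module
  obtain ⟨h5, h6⟩ := left_zero S hkl' (add_mem (sub_mem (Subalgebra.smul_mem _ (mul_mem hxj' hd2') _)
    (Subalgebra.smul_mem _ (mul_mem hd2' hxj') _)) (Subalgebra.smul_mem _ (mul_mem hxj' hd2') _))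
    (add_mem (sub_mem (mul_mem hxj' hw) (Subalgebra.smul_mem _ (mul_mem hw hxj') _))
      (Subalgebra.smul_mem _ (mul_mem hd1' hd2') _)) h4
  have h7 : V2 - α * V * U * κ = 0 := by
    have h8 : (V2 - α * V * U * κ) • (d1 * d2) = 0 := by
      have h9 : (V2 - α * V * U * κ) • (d1 * d2) = α • (w * S.x j) - S.x j * w := by
        rw [← sub_eq_zero, ← h6]; abel
      refine Sp_disj S.pbw (T1 := {m | m j = 0}) (T2 := {m | m j ≠ 0})
        (fun m h1 h2 => h2 h1) ?_ ?_
      · have := Sp_prod S j 0 hd1m hd2m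
        rw [pow_zero, mul_one] at this
        exact Submodule.smul_mem _ _ this
      · rw [h9]
        exact sub_mem (Submodule.smul_mem _ _ (Sp_right S hq2 hw)) (Sp_left S hq1 hw)
    by_contra h
    exact smul_ne S h (mul_ne_zero a2 b2) h8
  have h8 : (α * V * U * (S.lamstar j * β) - α * V2 + V2 * a * (S.lamstar j * β)) = 0 := by
    by_contra h
    apply smul_ne S h (mul_ne_zero b2 (x_ne S j))
    rw [hxd2] at h5
    rw [← h5]; module
  have hα0 : α ≠ 0 := by rintro rfl; rw [zero_mul] at hab; exact ha0 hab
  have hl1 : S.lam j - 1 ≠ 0 := sub_ne_zero.2 (lam_ne_one S j)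
  have hV2 : V2 * (a * (S.lam j - 1)) = α * V * U := by
    rw [sub_eq_zero.1 h7, hκ, inv_mul_cancel_right₀ (mul_ne_zero ha0 hl1)]
  have hV20 : V2 ≠ 0 := by
    rintro rfl
    rw [zero_mul] at hV2
    exact mul_ne_zero (mul_ne_zero hα0 hV) hU hV2.symm
  rw [← hV2, hab] at h8
  have h9 : V2 * α * (S.lam j * S.lamstar j) = V2 * α * 1 := by
    linear_combination h8 - (V2 * α * S.lam j * S.lamstar j) * hp
  exact mul_left_cancel₀ (mul_ne_zero hV20 hα0) h9

theorem lamstar_pred {c y : Fin N → R} (hs : IsPrimeSeq K S.toQNA η c y) {k j : Fin N}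
    (hk : IsPred η k j) : S.lamstar k = (S.lam j)⁻¹ := by
  obtain ⟨a1, a2⟩ := adj hs (tower_exists hs) j k j rfl hk
  exact eq_inv_of_mul_eq_one_right (lam_pair S hk.1 a1 a2)

theorem lamstar_lt {c y : Fin N → R} (hs : IsPrimeSeq K S.toQNA η c y) (n : ℕ) :
    ∀ k l : Fin N, (l : ℕ) = n → k ≤ l → η k = η l →
      (∃ l' : Fin N, l < l' ∧ η l' = η l) → S.lamstar k = S.lamstar l := by
  induction n using Nat.strong_induction_on with
  | _ n ih =>
  intro k l hl hkl hη hl'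
  rcases eq_or_lt_of_le hkl with rfl | hkl
  · rfl
  obtain ⟨p, hkp, hpl, hηp, hlast⟩ := exists_last η hkl
  have hp : IsPred η p l := ⟨hpl, by rw [hηp, hη], fun t h1 h2 => by rw [← hη]; exact hlast t h1 h2⟩
  obtain ⟨l', hll', hηl'⟩ := hl'
  obtain ⟨l2, -, hl2⟩ := exists_succ η hll' hηl'
  have hpl' : (p : ℕ) < l := hpl
  rw [ih p (by omega) k p rfl hkp hηp.symm ⟨l, hpl, hp.2.1.symm⟩, lamstar_pred hs hp]
  exact (eq_inv_of_mul_eq_one_right (lam_lamstar hs (tower_exists hs) hp hl2)).symm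

theorem lamstar_eq {c y : Fin N → R} (hs : IsPrimeSeq K S.toQNA η c y) (k l : Fin N) (hη : η k = η l)
    (hk : ∃ k' : Fin N, k < k' ∧ η k' = η k) (hl : ∃ l' : Fin N, l < l' ∧ η l' = η l) :
    S.lamstar k = S.lamstar l := by
  rcases le_total k l with h | h
  · exact lamstar_lt hs l k l rfl h hη hl
  · exact (lamstar_lt hs k l k rfl h hη.symm hk).symm

theorem lamstar_eq_inv {c y : Fin N → R} (hs : IsPrimeSeq K S.toQNA η c y) (k l : Fin N)
    (hη : η k = η l) (hk : ∃ k' : Fin N, k < k' ∧ η k' = η k)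
    (hl : ∃ l' : Fin N, l' < l ∧ η l' = η l) : S.lamstar k = (S.lam l)⁻¹ := by
  obtain ⟨l', hl', hηl⟩ := hl
  obtain ⟨p, -, hpl, hηp, hlast⟩ := exists_last η hl'
  have hp : IsPred η p l := ⟨hpl, by rw [hηp, hηl], fun t h1 h2 => by rw [← hηl]; exact hlast t h1 h2⟩
  rw [← lamstar_pred hs hp]
  exact lamstar_eq hs k p (by rw [hη, hp.2.1]) hk ⟨l, hpl, hp.2.1.symm⟩

end Main
end QN

/-- **Proposition (eigenvalues of symmetric quantum nilpotent algebras).**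
Let `R` be a symmetric quantum nilpotent algebra of dimension `N` with function `η`
from the prime element theorem, and let `λ*_k` be the `h*_k`-eigenvalue of `x_k`.
Then `λ*_k = λ*_l` whenever `η k = η l`, `s(k) ≠ +∞` and `s(l) ≠ +∞`, and
`λ*_k = λ_l⁻¹` whenever `η k = η l`, `s(k) ≠ +∞` and `p(l) ≠ −∞`. -/
theorem lamstar_eq_of_symQNA
    {K : Type u} [Field K] {R : Type v} [Ring R] [Algebra K R] {N r : ℕ}
    (S : SymQNA K R N r)
    (η : Fin N → ℤ) (c y : Fin N → R) (hseq : IsPrimeSeq K S.toQNA η c y) :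
    (∀ k l : Fin N, η k = η l →
      (∃ k' : Fin N, k < k' ∧ η k' = η k) → (∃ l' : Fin N, l < l' ∧ η l' = η l) →
      S.lamstar k = S.lamstar l) ∧
    (∀ k l : Fin N, η k = η l →
      (∃ k' : Fin N, k < k' ∧ η k' = η k) → (∃ l' : Fin N, l' < l ∧ η l' = η l) →
      S.lamstar k = (S.lam l)⁻¹) := by
  exact ⟨fun k l => QN.lamstar_eq hseq k l, fun k l => QN.lamstar_eq_inv hseq k l⟩
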